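/- Let G be a countably infinite discrete amenable group, X an infinite compact metrizable space with compatible metric d, and α: G ↷ X a minimal free continuous action such that E_G(X) is compact and zero-dimensional in the weak* topology. Then for every finite subset F ⊆ G and every ε > 0 and δ > 0, there exists a castle {(T_i, V_i) : i ∈ I} with every V_i open such that each T_i is (F,δ)-invariant, diam(t·V_i) < δ for all i ∈ I and t ∈ T_i, and μ(X \ ⊔_{i∈I} T_i·V_i) < ε for all μ ∈ M_G(X). -/

import Mathlib

open MeasureTheory Set Pointwise

variable (G X : Type*)

section Defs

variable [Group G] [MetricSpace X] [MeasurableSpace X] [MulAction G X]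

/-- A Borel probability measure is `G`-invariant. -/
def InvariantMeasure (μ : ProbabilityMeasure X) : Prop :=
  ∀ g : G, MeasureTheory.Measure.map (fun x => g • x) (μ : Measure X) = (μ : Measure X)

/-- `M_G(X)`: the set of `G`-invariant Borel probability measures on `X`. -/
def MG : Set (ProbabilityMeasure X) := {μ | InvariantMeasure G X μ}

/-- `E_G(X)`: the set of ergodic `G`-invariant Borel probability measures on `X`,
i.e. invariant measures giving every `G`-invariant Borel set measure `0` or `1`. -/
def EG : Set (ProbabilityMeasure X) :=
  {μ | InvariantMeasure G X μ ∧
    ∀ A : Set X, MeasurableSet A → (∀ g : G, g • A = A) → μ A = 0 ∨ μ A = 1}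

/-- The action of `G` on `X` is free. -/
def FreeAction : Prop := ∀ (g : G) (x : X), g • x = x → g = 1

/-- The action of `G` on `X` is minimal: there is no proper nonempty closed invariant subset. -/
def MinimalAction : Prop :=
  ∀ C : Set X, IsClosed C → (∀ g : G, g • C ⊆ C) → C = ∅ ∨ C = Set.univ

/-- The small boundary property. -/
def SmallBoundaryProperty : Prop :=
  ∀ (x : X) (U : Set X), IsOpen U → x ∈ U →
    ∃ V : Set X, IsOpen V ∧ x ∈ V ∧ V ⊆ U ∧ ∀ μ ∈ MG G X, μ (frontier V) = 0

/-- `S` is a `(K,δ)`-invariant finite subset of `G`. -/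
def FolnerInv (K : Finset G) (δ : ℝ) (S : Finset G) : Prop :=
  (1 - δ) * (S.card : ℝ) ≤ ({s | s ∈ S ∧ ∀ k ∈ K, k * s ∈ S} : Set G).ncard

/-- `G` is amenable: it admits `(K,δ)`-invariant nonempty finite subsets for all `K, δ`. -/
def AmenableGroup : Prop :=
  ∀ (K : Finset G) (δ : ℝ), 0 < δ → ∃ S : Finset G, S.Nonempty ∧ FolnerInv G K δ S

/-- `(S, V)` is a tower: the translates `s • V`, `s ∈ S`, are pairwise disjoint. -/
def IsTower (S : Finset G) (V : Set X) : Prop :=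
  (S : Set G).Pairwise fun s t => Disjoint (s • V) (t • V)

/-- `F ≺_m O`: subordination with `m`-colored multiplicity. -/
def SubordinateM (m : ℕ) (F O : Set X) : Prop :=
  ∃ (n : ℕ) (U : Fin n → Set X) (s : Fin n → G) (c : Fin n → Fin (m + 1)),
    (∀ k, IsOpen (U k)) ∧ F ⊆ ⋃ k, U k ∧ (∀ k, s k • U k ⊆ O) ∧
    ∀ k l, k ≠ l → c k = c l → Disjoint (s k • U k) (s l • U l)

/-- The action has dynamical `m`-comparison. -/
def HasMComparison (m : ℕ) : Prop :=
  ∀ F O : Set X, IsClosed F → IsOpen O →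
    (∀ μ ∈ MG G X, μ F < μ O) → SubordinateM G X m F O

/-- The action is `m`-almost finite. -/
def MAlmostFinite (m : ℕ) : Prop :=
  ∀ (n : ℕ), 1 ≤ n → ∀ (K : Finset G) (δ : ℝ), 0 < δ →
    ∃ (I : ℕ) (S : Fin I → Finset G) (V : Fin I → Set X) (c : Fin I → Fin (m + 1))
      (S' : Fin I → Finset G),
      (∀ i, IsOpen (V i)) ∧
      (∀ i, IsTower G X (S i) (closure (V i))) ∧
      (∀ i, FolnerInv G K δ (S i)) ∧
      (∀ i, ∀ s ∈ S i, Metric.diam (s • closure (V i)) < δ) ∧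
      (∀ i j, i ≠ j → c i = c j →
        Disjoint ((S i : Set G) • closure (V i)) ((S j : Set G) • closure (V j))) ∧
      (∀ i, S' i ⊆ S i) ∧ (∀ i, ((S' i).card : ℝ) ≤ (S i).card / n) ∧
      SubordinateM G X 0 (Set.univ \ ⋃ i, (S i : Set G) • V i) (⋃ i, (S' i : Set G) • V i)

end Defs

/-!
Fix first a single ergodic measure `ν`. Freeness makes the Følner sets based at the points of a
small set pairwise disjoint, so Ornstein–Weiss quasi-tilings yield a castle with Følner shapes which
covers all of `X` but a set of small `ν`-measure, and by regularity its bases may be taken open.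
The complement of an open castle is closed, so by upper semicontinuity the castle covers almost
everything for all measures near `ν` as well. As `E_G(X)` is compact and zero-dimensional, it splits
into finitely many disjoint compact pieces, each served by one castle.

To glue these castles, one needs disjoint open sets `W i`, almost of full measure for every measure
in the `i`-th piece. Finitely many continuous functions separate the pieces by their integrals, and
the mean ergodic theorem, uniform over the compact set `E_G(X)`, makes their Følner averages nearly
constant with respect to each ergodic measure. Hence the values of the averages tell the pieces
apart. Restricting the `i`-th castle to `W i` makes the castles disjoint at a small cost.

Finally, the maximum over `M_G(X)` of the measure of a closed set is attained at an extreme point,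
that is, at an ergodic measure.
-/

noncomputable section

open Filter
open scoped Classical Finset Topology

variable {G X} {ι : Type*}

/-! ### Følner sets -/

section Folner

variable [Group G] {K K' S T R : Finset G} {δ δ' e : ℝ}

/-- The `K`-boundary of `S`: the elements of `S` which some element of `K` moves out of `S`. -/
def translationBoundary (K S : Finset G) : Finset G := {s ∈ S | ∃ k ∈ K, k * s ∉ S}

theorem folnerInv_iff_card_translationBoundary_le :
    FolnerInv G K δ S ↔ (#(translationBoundary K S) : ℝ) ≤ δ * #S := by
  have hcore : ({s | s ∈ S ∧ ∀ k ∈ K, k * s ∈ S} : Set G) =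
      ({s ∈ S | ¬ ∃ k ∈ K, k * s ∉ S} : Finset G) := by
    ext s; simp
  have hcard := Finset.card_filter_add_card_filter_not (s := S) (fun s ↦ ∃ k ∈ K, k * s ∉ S)
  have hcard' : (#(translationBoundary K S) : ℝ) + #{s ∈ S | ¬ ∃ k ∈ K, k * s ∉ S} = #S :=
    mod_cast hcard
  rw [FolnerInv, hcore, ncard_coe_finset]
  constructor <;> intro h <;> linarith

theorem translationBoundary_mono_left (h : K ⊆ K') (S : Finset G) :
    translationBoundary K S ⊆ translationBoundary K' S :=
  Finset.monotone_filter_right S fun _ _ ⟨k, hk, hks⟩ ↦ ⟨k, h hk, hks⟩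

theorem translationBoundary_union_subset (K S T : Finset G) :
    translationBoundary K (S ∪ T) ⊆ translationBoundary K S ∪ translationBoundary K T := by
  intro s hs
  simp only [translationBoundary, Finset.mem_union, Finset.mem_filter] at hs ⊢
  obtain ⟨hsS | hsT, k, hk, hks⟩ := hs
  · exact .inl ⟨hsS, k, hk, fun h ↦ hks (.inl h)⟩
  · exact .inr ⟨hsT, k, hk, fun h ↦ hks (.inr h)⟩

theorem card_translationBoundary_le_of_subset (K : Finset G) (h : R ⊆ S) :
    #(translationBoundary K R) ≤ #(translationBoundary K S) + #K * #(S \ R) := by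
  have hsub : translationBoundary K R ⊆
      translationBoundary K S ∪ K.biUnion fun k ↦ (S \ R).image (k⁻¹ * ·) := by
    intro s hs
    simp only [translationBoundary, Finset.mem_filter] at hs
    obtain ⟨hsR, k, hk, hks⟩ := hs
    by_cases hkS : k * s ∈ S
    · refine Finset.mem_union_right _ (Finset.mem_biUnion.2 ⟨k, hk, Finset.mem_image.2
        ⟨k * s, Finset.mem_sdiff.2 ⟨hkS, hks⟩, inv_mul_cancel_left k s⟩⟩)
    · exact Finset.mem_union_left _ (Finset.mem_filter.2 ⟨h hsR, k, hk, hkS⟩)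
  calc #(translationBoundary K R)
      ≤ #(translationBoundary K S) + #(K.biUnion fun k ↦ (S \ R).image (k⁻¹ * ·)) :=
        (Finset.card_le_card hsub).trans (Finset.card_union_le _ _)
    _ ≤ #(translationBoundary K S) + #K * #(S \ R) := by
        gcongr
        exact Finset.card_biUnion_le_card_mul _ _ _ fun k _ ↦ Finset.card_image_le

namespace FolnerInv

theorem empty (K : Finset G) (δ : ℝ) : FolnerInv G K δ ∅ := by
  simp [folnerInv_iff_card_translationBoundary_le, translationBoundary]

theorem mono (hK : K ⊆ K') (hδ : δ' ≤ δ) (h : FolnerInv G K' δ' S) : FolnerInv G K δ S := by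
  rw [folnerInv_iff_card_translationBoundary_le] at h ⊢
  calc (#(translationBoundary K S) : ℝ)
      ≤ #(translationBoundary K' S) := mod_cast Finset.card_le_card
        (translationBoundary_mono_left hK S)
    _ ≤ δ' * #S := h
    _ ≤ δ * #S := by gcongr

theorem union (hST : Disjoint S T) (hS : FolnerInv G K δ S) (hT : FolnerInv G K δ T) :
    FolnerInv G K δ (S ∪ T) := by
  rw [folnerInv_iff_card_translationBoundary_le] at hS hT ⊢
  calc (#(translationBoundary K (S ∪ T)) : ℝ)
      ≤ #(translationBoundary K S) + #(translationBoundary K T) := mod_cast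
        (Finset.card_le_card (translationBoundary_union_subset K S T)).trans
          (Finset.card_union_le _ _)
    _ ≤ δ * #S + δ * #T := add_le_add hS hT
    _ = δ * #(S ∪ T) := by rw [Finset.card_union_of_disjoint hST]; push_cast; ring

theorem of_subset (hRS : R ⊆ S) (hR : (1 - e) * #S ≤ #R) (hS : FolnerInv G K δ' S)
    (hδ : 0 ≤ δ) (h : δ' + #K * e ≤ δ * (1 - e)) : FolnerInv G K δ R := by
  rw [folnerInv_iff_card_translationBoundary_le] at hS ⊢
  have hdiff : (#(S \ R) : ℝ) ≤ e * #S := by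
    rw [Finset.card_sdiff_of_subset hRS, Nat.cast_sub (Finset.card_le_card hRS)]
    linarith
  calc (#(translationBoundary K R) : ℝ)
      ≤ #(translationBoundary K S) + #K * #(S \ R) :=
        mod_cast card_translationBoundary_le_of_subset K hRS
    _ ≤ δ' * #S + #K * (e * #S) := by gcongr
    _ = (δ' + #K * e) * #S := by ring
    _ ≤ δ * (1 - e) * #S := by gcongr
    _ = δ * ((1 - e) * #S) := by ring
    _ ≤ δ * #R := by gcongr

end FolnerInv

variable (G) in
/-- The filter of increasingly invariant nonempty finite subsets of `G`: a property holds
eventually along it iff it holds for all nonempty `(K, δ)`-invariant sets, for some `K` and some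
`δ > 0`. -/
def folnerFilter : Filter (Finset G) :=
  ⨅ p : Finset G × Ioi (0 : ℝ), 𝓟 {S | S.Nonempty ∧ FolnerInv G p.1 p.2 S}

namespace folnerFilter

theorem eventually_nonempty_and_folnerInv (K : Finset G) (hδ : 0 < δ) :
    ∀ᶠ S in folnerFilter G, S.Nonempty ∧ FolnerInv G K δ S :=
  mem_iInf_of_mem (K, ⟨δ, hδ⟩) (mem_principal_self _)

theorem eventually_folnerInv (K : Finset G) (hδ : 0 < δ) :
    ∀ᶠ S in folnerFilter G, FolnerInv G K δ S :=
  (eventually_nonempty_and_folnerInv K hδ).mono fun _ h ↦ h.2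

variable (G) in
theorem eventually_nonempty : ∀ᶠ S in folnerFilter G, S.Nonempty :=
  (eventually_nonempty_and_folnerInv ∅ one_pos).mono fun _ h ↦ h.1

end folnerFilter

theorem AmenableGroup.neBot_folnerFilter (hG : AmenableGroup G) : (folnerFilter G).NeBot := by
  refine iInf_neBot_of_directed' (fun p q ↦ ?_) fun p ↦ principal_neBot_iff.2 (hG p.1 p.2 p.2.2)
  refine ⟨(p.1 ∪ q.1, ⟨min (p.2 : ℝ) q.2, mem_Ioi.2 (lt_min p.2.2 q.2.2)⟩), ?_, ?_⟩
  · exact principal_mono.2 fun S hS ↦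
      ⟨hS.1, hS.2.mono Finset.subset_union_left (min_le_left _ _)⟩
  · exact principal_mono.2 fun S hS ↦
      ⟨hS.1, hS.2.mono Finset.subset_union_right (min_le_right _ _)⟩

end Folner

/-! ### Counting -/

section Counting

theorem card_filter_mem_eq_sum_indicator (s : Finset ι) (A : ι → Set X) (y : X) :
    (#{i ∈ s | y ∈ A i} : ℝ) = ∑ i ∈ s, (A i).indicator (fun _ ↦ 1) y := by
  simp [Set.indicator_apply]

variable [MeasurableSpace X] (ν : Measure X) [IsFiniteMeasure ν] {s : Finset ι} {A : ι → Set X}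
  {C : Set X} {a m : ℝ}

theorem measurable_card_filter_mem (hA : ∀ i ∈ s, MeasurableSet (A i)) :
    Measurable fun y ↦ (#{i ∈ s | y ∈ A i} : ℝ) := by
  simp_rw [card_filter_mem_eq_sum_indicator]
  exact Finset.measurable_fun_sum _ fun i hi ↦ measurable_const.indicator (hA i hi)

theorem integrable_card_filter_mem (hA : ∀ i ∈ s, MeasurableSet (A i)) :
    Integrable (fun y ↦ (#{i ∈ s | y ∈ A i} : ℝ)) ν := by
  simp_rw [card_filter_mem_eq_sum_indicator]
  exact integrable_finsetSum _ fun i hi ↦ (integrable_const _).indicator (hA i hi)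

theorem integral_card_filter_mem (hA : ∀ i ∈ s, MeasurableSet (A i)) :
    ∫ y, (#{i ∈ s | y ∈ A i} : ℝ) ∂ν = ∑ i ∈ s, ν.real (A i) := by
  simp_rw [card_filter_mem_eq_sum_indicator]
  rw [integral_finsetSum _ fun i hi ↦ (integrable_const _).indicator (hA i hi)]
  refine Finset.sum_congr rfl fun i hi ↦ ?_
  simp [integral_indicator (hA i hi)]

theorem mul_measureReal_le_sum_of_le_card (hA : ∀ i ∈ s, MeasurableSet (A i))
    (hC : MeasurableSet C) (h : ∀ y ∈ C, a ≤ #{i ∈ s | y ∈ A i}) :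
    a * ν.real C ≤ ∑ i ∈ s, ν.real (A i) := by
  calc a * ν.real C = ∫ y, C.indicator (fun _ ↦ a) y ∂ν := by
        simp [integral_indicator hC, mul_comm]
    _ ≤ ∫ y, (#{i ∈ s | y ∈ A i} : ℝ) ∂ν := by
        refine integral_mono ((integrable_const _).indicator hC)
          (integrable_card_filter_mem ν hA) fun y ↦ ?_
        exact indicator_apply_le' (h y) fun _ ↦ by positivity
    _ = ∑ i ∈ s, ν.real (A i) := integral_card_filter_mem ν hA

theorem sum_measureReal_le_of_card_le (hA : ∀ i ∈ s, MeasurableSet (A i))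
    (hC : MeasurableSet C) (h : ∀ y ∈ C, #{i ∈ s | y ∈ A i} ≤ a + m)
    (h' : ∀ y ∉ C, #{i ∈ s | y ∈ A i} ≤ a) :
    ∑ i ∈ s, ν.real (A i) ≤ a * ν.real univ + m * ν.real C := by
  calc ∑ i ∈ s, ν.real (A i) = ∫ y, (#{i ∈ s | y ∈ A i} : ℝ) ∂ν :=
        (integral_card_filter_mem ν hA).symm
    _ ≤ ∫ y, (a + C.indicator (fun _ ↦ m) y) ∂ν := by
        refine integral_mono (integrable_card_filter_mem ν hA)
          ((integrable_const _).add ((integrable_const _).indicator hC)) fun y ↦ ?_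
        by_cases hy : y ∈ C
        · simpa [hy] using h y hy
        · simpa [hy] using h' y hy
    _ = a * ν.real univ + m * ν.real C := by
        rw [integral_add (integrable_const _) ((integrable_const _).indicator hC)]
        simp [integral_indicator hC, mul_comm]

end Counting

theorem measureReal_smul_preimage [Group G] [MeasurableSpace X] [MulAction G X] (ν : Measure X)
    [SMulInvariantMeasure G X ν] (g : G) (A : Set X) : ν.real ((g • ·) ⁻¹' A) = ν.real A := by
  rw [Measure.real, measure_preimage_smul, Measure.real]

/-! ### Partial tilings -/

variable (G X) in
/-- A measurable partial tiling of the orbits of `G ↷ X` by finite subsets of `G`, encoded by its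
levels: `x ∈ level s` means that `x` has position `s` in its tile, whose centre is `s⁻¹ • x`. -/
structure PartialTiling [MeasurableSpace X] where
  support : Finset G
  level : G → Set X
  measurableSet_level : ∀ s, MeasurableSet (level s)
  disjoint_level : Pairwise (Function.onFun Disjoint level)
  level_eq_empty : ∀ s ∉ support, level s = ∅

namespace PartialTiling

section Basic

variable [MeasurableSpace X] (P : PartialTiling G X) {s t : G} {x : X}

/-- The set of tiled points. -/
def domain : Set X := ⋃ s, P.level s

theorem mem_domain : x ∈ P.domain ↔ ∃ s, x ∈ P.level s := mem_iUnion

theorem mem_support_of_mem_level (h : x ∈ P.level s) : s ∈ P.support :=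
  by_contra fun hs ↦ by simp [P.level_eq_empty s hs] at h

theorem eq_of_mem_level (hs : x ∈ P.level s) (ht : x ∈ P.level t) : s = t :=
  P.disjoint_level.eq (not_disjoint_iff.2 ⟨x, hs, ht⟩)

theorem domain_eq_biUnion : P.domain = ⋃ s ∈ P.support, P.level s :=
  Subset.antisymm
    (iUnion_subset fun _ _ hx ↦ mem_biUnion (P.mem_support_of_mem_level hx) hx)
    (iUnion₂_subset fun s _ ↦ subset_iUnion P.level s)

theorem measurableSet_domain : MeasurableSet P.domain := by
  rw [P.domain_eq_biUnion]
  exact P.support.measurableSet_biUnion fun s _ ↦ P.measurableSet_level s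

variable (G X) in
/-- The tiling without tiles, with prescribed support. -/
def empty (S : Finset G) : PartialTiling G X where
  support := S
  level _ := ∅
  measurableSet_level _ := .empty
  disjoint_level _ _ _ := disjoint_bot_left
  level_eq_empty _ _ := rfl

end Basic

section Shape

variable [MeasurableSpace X] [SMul G X] (P : PartialTiling G X) {s : G} {y : X}

/-- The shape of the tile with centre `y`; it is empty if there is no such tile. -/
def shape (y : X) : Finset G := {s ∈ P.support | s • y ∈ P.level s}

theorem mem_shape : s ∈ P.shape y ↔ s • y ∈ P.level s := by
  simp only [shape, Finset.mem_filter, and_iff_right_iff_imp]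
  exact P.mem_support_of_mem_level

theorem smul_mem_domain_of_mem_shape (h : s ∈ P.shape y) : s • y ∈ P.domain :=
  P.mem_domain.2 ⟨s, P.mem_shape.1 h⟩

theorem shape_empty (S : Finset G) (y : X) : (empty G X S).shape y = ∅ := by
  simp [shape, empty]

/-- The set of centres of tiles. -/
def centers : Set X := {y | (P.shape y).Nonempty}

theorem mem_centers : y ∈ P.centers ↔ (P.shape y).Nonempty := Iff.rfl

theorem centers_empty (S : Finset G) : (empty G X S).centers = ∅ := by
  simp [centers, shape_empty]

theorem centers_eq_biUnion : P.centers = ⋃ s ∈ P.support, (s • ·) ⁻¹' P.level s := by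
  ext y
  simp [mem_centers, Finset.Nonempty, shape]

theorem measurableSet_centers [MeasurableConstSMul G X] : MeasurableSet P.centers := by
  rw [centers_eq_biUnion]
  exact P.support.measurableSet_biUnion fun s _ ↦
    measurable_const_smul s (P.measurableSet_level s)

end Shape

section Measure

variable [Group G] [MeasurableSpace X] [MulAction G X]
  (P : PartialTiling G X) (ν : Measure X) [IsFiniteMeasure ν] [SMulInvariantMeasure G X ν]

/-- Mass transport: every tiled point sends its mass to the centre of its tile. -/
theorem measureReal_domain_inter {B : Set X} (hB : MeasurableSet B) :
    ν.real (P.domain ∩ B) = ∑ s ∈ P.support, ν.real ((s • ·) ⁻¹' (P.level s ∩ B)) := by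
  rw [domain_eq_biUnion, iUnion₂_inter, measureReal_biUnion_finset]
  · simp_rw [measureReal_smul_preimage]
  · exact fun s _ t _ hst ↦ (P.disjoint_level hst).mono inter_subset_left inter_subset_left
  · exact fun s _ ↦ (P.measurableSet_level s).inter hB

variable [MeasurableConstSMul G X]

theorem mul_measureReal_centers_le {B : Set X} (hB : MeasurableSet B) {a : ℝ}
    (h : ∀ y ∈ P.centers, a ≤ #{s ∈ P.shape y | s • y ∈ B}) :
    a * ν.real P.centers ≤ ν.real (P.domain ∩ B) := by
  rw [P.measureReal_domain_inter ν hB]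
  refine mul_measureReal_le_sum_of_le_card ν (fun s _ ↦ measurable_const_smul s
    ((P.measurableSet_level s).inter hB)) P.measurableSet_centers fun y hy ↦ (h y hy).trans_eq ?_
  simp only [shape, Finset.filter_filter, mem_preimage, mem_inter_iff]

theorem measureReal_domain_le :
    ν.real P.domain ≤ #P.support * ν.real P.centers := by
  have hle := sum_measureReal_le_of_card_le ν (s := P.support)
    (A := fun s ↦ (s • ·) ⁻¹' P.level s) (a := 0) (m := #P.support)
    (fun s _ ↦ measurable_const_smul s (P.measurableSet_level s)) P.measurableSet_centers
    (fun y _ ↦ by rw [zero_add]; exact mod_cast Finset.card_filter_le _ _)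
    (fun y hy ↦ by
      rw [mem_centers, Finset.not_nonempty_iff_eq_empty] at hy
      exact_mod_cast (Finset.card_eq_zero.2 hy).le)
  have hdomain := P.measureReal_domain_inter ν .univ
  simp only [inter_univ] at hdomain
  linarith

end Measure

section Extend

variable [Group G] [MeasurableSpace X] [MulAction G X] [MeasurableConstSMul G X]
  (P : PartialTiling G X) {C : Set X} {s : G} {y : X}

/-- Put a tile at every point of `C`, as large as the existing tiles and `P.support` permit. -/
def extend (hC : MeasurableSet C) (hdisj : (P.support : Set G).PairwiseDisjoint (· • C)) :
    PartialTiling G X where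
  support := P.support
  level s := P.level s ∪ {x ∈ s • C | s ∈ P.support ∧ x ∉ P.domain}
  measurableSet_level s := (P.measurableSet_level s).union
    ((hC.const_smul s).inter ((MeasurableSet.const _).inter P.measurableSet_domain.compl))
  disjoint_level := by
    refine fun s t hst ↦ disjoint_left.2 ?_
    rintro x (hxs | ⟨hxs, hs, hx⟩) (hxt | ⟨hxt, ht, hx'⟩)
    · exact hst (P.eq_of_mem_level hxs hxt)
    · exact hx' (P.mem_domain.2 ⟨s, hxs⟩)
    · exact hx (P.mem_domain.2 ⟨t, hxt⟩)
    · exact disjoint_left.1 (hdisj hs ht hst) hxs hxt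
  level_eq_empty s hs := by simp [P.level_eq_empty s hs, hs]

variable {P} {hC : MeasurableSet C} {hdisj : (P.support : Set G).PairwiseDisjoint (· • C)}

theorem mem_shape_extend : s ∈ (P.extend hC hdisj).shape y ↔
    s ∈ P.shape y ∨ y ∈ C ∧ s ∈ P.support ∧ s • y ∉ P.domain := by
  simp only [mem_shape, extend, mem_union, mem_sep_iff, smul_mem_smul_set_iff]

theorem domain_subset_domain_extend : P.domain ⊆ (P.extend hC hdisj).domain :=
  iUnion_mono fun _ ↦ subset_union_left

theorem shape_subset_shape_extend (y : X) : P.shape y ⊆ (P.extend hC hdisj).shape y :=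
  fun _ hs ↦ mem_shape_extend.2 (.inl hs)

theorem smul_mem_domain_extend (hy : y ∈ C) (hs : s ∈ P.support) :
    s • y ∈ (P.extend hC hdisj).domain := by
  by_cases h : s • y ∈ P.domain
  · exact domain_subset_domain_extend h
  · exact smul_mem_domain_of_mem_shape _ (mem_shape_extend.2 (.inr ⟨hy, hs, h⟩))

end Extend

section Quasitiling

variable [Group G] [MeasurableSpace X] [MulAction G X] {P : PartialTiling G X} {e η b : ℝ}
  {Y : Set X}

/-- All tiles are `(1 - e)`-large subsets of `P.support` with centres in `Y`, and all translates of
their centres by `P.support` are tiled (not necessarily by the same tile). -/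
structure IsQuasitiling (P : PartialTiling G X) (e : ℝ) (Y : Set X) : Prop where
  centers_subset : P.centers ⊆ Y
  le_card_shape : ∀ y ∈ P.centers, (1 - e) * #P.support ≤ #(P.shape y)
  smul_mem_domain : ∀ y ∈ P.centers, ∀ s ∈ P.support, s • y ∈ P.domain

theorem isQuasitiling_empty (S : Finset G) (e : ℝ) (Y : Set X) :
    (empty G X S).IsQuasitiling e Y := by
  constructor <;> simp [centers_empty]

variable [MeasurableConstSMul G X]

theorem IsQuasitiling.extend (hP : P.IsQuasitiling e Y) {C : Set X} (hC : MeasurableSet C)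
    (hdisj : (P.support : Set G).PairwiseDisjoint (· • C)) (hCY : C ⊆ Y)
    (hfree : ∀ y ∈ C, (1 - e) * #P.support ≤ #{s ∈ P.support | s • y ∉ P.domain}) :
    (P.extend hC hdisj).IsQuasitiling e Y := by
  have hcenters : ∀ y ∈ (P.extend hC hdisj).centers, y ∈ C ∨ y ∈ P.centers := by
    rintro y ⟨s, hs⟩
    exact (mem_shape_extend.1 hs).elim (fun h ↦ .inr ⟨s, h⟩) fun h ↦ .inl h.1
  refine ⟨fun y hy ↦ ?_, fun y hy ↦ ?_, fun y hy s hs ↦ ?_⟩ <;>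
    obtain hyC | hyP := hcenters y hy
  · exact hCY hyC
  · exact hP.centers_subset hyP
  · refine (hfree y hyC).trans (Nat.cast_le.2 (Finset.card_le_card fun s hs ↦ ?_))
    obtain ⟨hs, hsy⟩ := Finset.mem_filter.1 hs
    exact mem_shape_extend.2 (.inr ⟨hyC, hs, hsy⟩)
  · exact (hP.le_card_shape y hyP).trans
      (Nat.cast_le.2 (Finset.card_le_card (shape_subset_shape_extend y)))
  · exact smul_mem_domain_extend hyC hs
  · exact domain_subset_domain_extend (hP.smul_mem_domain y hyP s hs)

/-- The greedy algorithm: go through the sets `U ∈ 𝒰` one after the other and put a tile at every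
point of `Y ∩ U` around which there is still enough room. -/
theorem exists_isQuasitiling (he : e ≤ 1) (S : Finset G) (hY : MeasurableSet Y)
    (𝒰 : Finset (Set X)) (h𝒰 : ∀ U ∈ 𝒰, MeasurableSet U)
    (hdisj : ∀ U ∈ 𝒰, (S : Set G).PairwiseDisjoint (· • U)) :
    ∃ P : PartialTiling G X, P.support = S ∧ P.IsQuasitiling e Y ∧
      ∀ y ∈ Y, ∀ U ∈ 𝒰, y ∈ U → e * #S ≤ #{s ∈ S | s • y ∈ P.domain} := by
  induction 𝒰 using Finset.induction_on with
  | empty => exact ⟨empty G X S, rfl, isQuasitiling_empty S e Y, by simp⟩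
  | insert U 𝒰 _ ih =>
    simp only [Finset.forall_mem_insert] at h𝒰 hdisj ⊢
    obtain ⟨P, rfl, hP, hcover⟩ := ih h𝒰.2 hdisj.2
    let room : Set X := {y | (1 - e) * #P.support ≤ #{s ∈ P.support | s • y ∉ P.domain}}
    have hroom : MeasurableSet room := by
      refine measurableSet_le measurable_const ?_
      convert measurable_card_filter_mem (s := P.support) (A := fun s ↦ (s • ·) ⁻¹' P.domainᶜ)
        fun s _ ↦ measurable_const_smul s P.measurableSet_domain.compl
    have hCm : MeasurableSet (Y ∩ U ∩ room) := (hY.inter h𝒰.1).inter hroom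
    have hCdisj : (P.support : Set G).PairwiseDisjoint (· • (Y ∩ U ∩ room)) :=
      hdisj.1.mono fun s ↦ smul_set_mono (inter_subset_left.trans inter_subset_right)
    let Q := P.extend hCm hCdisj
    have hmono (y : X) : #{s ∈ P.support | s • y ∈ P.domain} ≤
        #{s ∈ P.support | s • y ∈ Q.domain} :=
      Finset.card_le_card (Finset.monotone_filter_right _ fun _ _ h ↦
        domain_subset_domain_extend h)
    refine ⟨Q, rfl, hP.extend hCm hCdisj (inter_subset_left.trans inter_subset_left)
      fun y hy ↦ hy.2, fun y hyY ↦ ⟨fun hyU ↦ ?_, fun V hV hyV ↦ ?_⟩⟩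
    · by_cases hy : y ∈ room
      · have hyC : y ∈ Y ∩ U ∩ room := ⟨⟨hyY, hyU⟩, hy⟩
        have hall : ∀ s ∈ P.support, s • y ∈ Q.domain := fun s ↦ smul_mem_domain_extend hyC
        rw [Finset.filter_true_of_mem hall]
        exact mul_le_of_le_one_left (Nat.cast_nonneg _) he
      · have hsplit : (#{s ∈ P.support | s • y ∈ P.domain} : ℝ) +
            #{s ∈ P.support | s • y ∉ P.domain} = #P.support :=
          mod_cast Finset.card_filter_add_card_filter_not _
        have hlt : (#{s ∈ P.support | s • y ∉ P.domain} : ℝ) < (1 - e) * #P.support :=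
          not_le.1 hy
        have hle : (#{s ∈ P.support | s • y ∈ P.domain} : ℝ) ≤ _ := Nat.cast_le.2 (hmono y)
        linarith
    · exact (hcover y hyY V hV hyV).trans (Nat.cast_le.2 (hmono y))

variable (ν : Measure X) [IsFiniteMeasure ν] [SMulInvariantMeasure G X ν]

theorem IsQuasitiling.measureReal_smul_domain_diff_le (hP : P.IsQuasitiling e Y) (he : e < 1)
    {d : G} (hd : FolnerInv G {d} η P.support) (hη : 0 ≤ η) :
    ν.real (d • P.domain \ P.domain) ≤ η / (1 - e) * ν.real P.domain := by
  have hsub : d • P.domain \ P.domain ⊆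
      ⋃ s ∈ translationBoundary {d} P.support, (d * s) • P.centers := by
    rintro _ ⟨⟨x, hx, rfl⟩, hdx⟩
    obtain ⟨s, hs⟩ := P.mem_domain.1 hx
    obtain ⟨y, rfl⟩ : ∃ y, s • y = x := ⟨s⁻¹ • x, smul_inv_smul s x⟩
    have hy : y ∈ P.centers := ⟨s, P.mem_shape.2 hs⟩
    simp only [← mul_smul] at hdx ⊢
    refine mem_biUnion (Finset.mem_filter.2 ⟨P.mem_support_of_mem_level hs, d, by simp, fun h ↦ ?_⟩)
      (smul_mem_smul_set hy)
    exact hdx (hP.smul_mem_domain y hy _ h)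
  have hcenters : (1 - e) * #P.support * ν.real P.centers ≤ ν.real P.domain := by
    simpa using P.mul_measureReal_centers_le ν .univ (a := (1 - e) * #P.support)
      fun y hy ↦ by simpa using hP.le_card_shape y hy
  calc ν.real (d • P.domain \ P.domain)
      ≤ ∑ s ∈ translationBoundary {d} P.support, ν.real ((d * s) • P.centers) :=
        (measureReal_mono hsub (measure_ne_top _ _)).trans (measureReal_biUnion_finset_le _ _)
    _ = #(translationBoundary {d} P.support) * ν.real P.centers := by
        simp [Measure.real, measure_smul]
    _ ≤ η * #P.support * ν.real P.centers := by
        gcongr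
        exact folnerInv_iff_card_translationBoundary_le.1 hd
    _ = η / (1 - e) * ((1 - e) * #P.support * ν.real P.centers) := by
        field_simp [(sub_pos.2 he).ne']
    _ ≤ η / (1 - e) * ν.real P.domain := by
        have := sub_nonneg.2 he.le
        gcongr

theorem mul_measureReal_le_measureReal_domain (hS : P.support.Nonempty) (hY : MeasurableSet Y)
    (h : ∀ y ∈ Y, e * #P.support ≤ #{s ∈ P.support | s • y ∈ P.domain}) :
    e * ν.real Y ≤ ν.real P.domain := by
  have hsum := mul_measureReal_le_sum_of_le_card ν (s := P.support)
    (A := fun s ↦ (s • ·) ⁻¹' P.domain)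
    (fun s _ ↦ measurable_const_smul s P.measurableSet_domain) hY h
  simp only [measureReal_smul_preimage, Finset.sum_const, nsmul_eq_mul] at hsum
  have hcard : (0 : ℝ) < #P.support := mod_cast hS.card_pos
  refine le_of_mul_le_mul_left ?_ hcard
  linarith

theorem IsQuasitiling.mul_measureReal_domain_le_inter
    (hP : P.IsQuasitiling e {y | b * #P.support ≤ #{s ∈ P.support | s • y ∈ Y}}) (heb : e ≤ b)
    (hY : MeasurableSet Y) : (b - e) * ν.real P.domain ≤ ν.real (P.domain ∩ Y) := by
  calc (b - e) * ν.real P.domain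
      ≤ (b - e) * (#P.support * ν.real P.centers) := by
        have := sub_nonneg.2 heb
        gcongr
        exact P.measureReal_domain_le ν
    _ = (b - e) * #P.support * ν.real P.centers := by ring
    _ ≤ ν.real (P.domain ∩ Y) := P.mul_measureReal_centers_le ν hY fun y hy ↦ ?_
  have hmissing : (#(P.support \ P.shape y) : ℝ) ≤ e * #P.support := by
    have hsub : P.shape y ⊆ P.support := Finset.filter_subset _ _
    rw [Finset.card_sdiff_of_subset hsub, Nat.cast_sub (Finset.card_le_card hsub)]
    linarith [hP.le_card_shape y hy]
  have hsub : {s ∈ P.support | s • y ∈ Y} ⊆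
      {s ∈ P.shape y | s • y ∈ Y} ∪ P.support \ P.shape y := by
    intro s hs
    simp only [Finset.mem_union, Finset.mem_filter, Finset.mem_sdiff] at hs ⊢
    tauto
  have hle : (#{s ∈ P.support | s • y ∈ Y} : ℝ) ≤
      #{s ∈ P.shape y | s • y ∈ Y} + #(P.support \ P.shape y) :=
    mod_cast (Finset.card_le_card hsub).trans (Finset.card_union_le _ _)
  have hcenter : b * #P.support ≤ #{s ∈ P.support | s • y ∈ Y} := hP.centers_subset hy
  linarith

end Quasitiling

end PartialTiling

section SeparatingCover

theorem FreeAction.isCancelSMul [Group G] [MetricSpace X] [MeasurableSpace X] [MulAction G X]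
    (h : FreeAction G X) : IsCancelSMul G X where
  right_cancel' s t x hst := by
    refine (inv_mul_eq_one.1 (h (t⁻¹ * s) x ?_)).symm
    rw [mul_smul, hst, inv_smul_smul]

variable [Group G] [TopologicalSpace X] [T2Space X] [MulAction G X] [ContinuousConstSMul G X]
  [IsCancelSMul G X]

theorem exists_isOpen_mem_pairwiseDisjoint_smul (S : Finset G) (x : X) :
    ∃ U : Set X, IsOpen U ∧ x ∈ U ∧ (S : Set G).PairwiseDisjoint (· • U) := by
  have hdisj : (S : Set G).PairwiseDisjoint fun s ↦ 𝓝 (s • x) := fun s _ t _ hst ↦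
    disjoint_nhds_nhds.2 fun h ↦ hst (IsCancelSMul.right_cancel _ _ _ h)
  obtain ⟨W, hW, hWdisj⟩ := hdisj.exists_mem_filter S.finite_toSet
  have hU : ⋂ s ∈ S, (s • ·) ⁻¹' W s ∈ 𝓝 x := (Filter.biInter_finset_mem S).2 fun s _ ↦
    (continuous_const_smul s).continuousAt (hW s)
  refine ⟨interior (⋂ s ∈ S, (s • ·) ⁻¹' W s), isOpen_interior, mem_interior_iff_mem_nhds.2 hU,
    hWdisj.mono_on fun s hs ↦ ?_⟩
  rintro _ ⟨y, hy, rfl⟩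
  exact mem_iInter₂.1 (interior_subset hy) s hs

theorem exists_finset_isOpen_cover_pairwiseDisjoint_smul [CompactSpace X] (S : Finset G) :
    ∃ 𝒰 : Finset (Set X), (∀ U ∈ 𝒰, IsOpen U) ∧
      (∀ U ∈ 𝒰, (S : Set G).PairwiseDisjoint (· • U)) ∧ ∀ x, ∃ U ∈ 𝒰, x ∈ U := by
  choose U hUo hxU hU using exists_isOpen_mem_pairwiseDisjoint_smul (X := X) S
  obtain ⟨t, ht⟩ := isCompact_univ.elim_finite_subcover U hUo fun x _ ↦ mem_iUnion.2 ⟨x, hxU x⟩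
  refine ⟨t.image U, Finset.forall_mem_image.2 fun x _ ↦ hUo x,
    Finset.forall_mem_image.2 fun x _ ↦ hU x, fun y ↦ ?_⟩
  obtain ⟨x, hx, hy⟩ := mem_iUnion₂.1 (ht (mem_univ y))
  exact ⟨U x, Finset.mem_image_of_mem U hx, hy⟩

end SeparatingCover

namespace PartialTiling

section Overlay

variable [Group G] [MeasurableSpace X] [MulAction G X] (P Q : PartialTiling G X) {s : G} {x y : X}

/-- The points whose `P`-tile does not meet the tiles of `Q`. -/
def freeCenters : Set X := {y | ∀ t ∈ P.shape y, t • y ∉ Q.domain}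

theorem disjoint_shape_of_mem_freeCenters {P Q : PartialTiling G X} {y : X}
    (hy : y ∈ P.freeCenters Q) : Disjoint (Q.shape y) (P.shape y) :=
  Finset.disjoint_left.2 fun s hQ hP ↦ hy s hP (Q.smul_mem_domain_of_mem_shape hQ)

theorem measurableSet_freeCenters [MeasurableConstSMul G X] :
    MeasurableSet (P.freeCenters Q) := by
  have h : P.freeCenters Q =
      ⋂ t ∈ P.support, (t • ·) ⁻¹' (P.level t)ᶜ ∪ (t • ·) ⁻¹' Q.domainᶜ := by
    ext y
    simp [freeCenters, shape, imp_iff_not_or, or_assoc]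
  rw [h]
  exact P.support.measurableSet_biInter fun t _ ↦
    (measurable_const_smul t (P.measurableSet_level t).compl).union
      (measurable_const_smul t Q.measurableSet_domain.compl)

variable [MeasurableConstSMul G X]

/-- All tiles of `Q` together with those tiles of `P` which do not meet a tile of `Q`. -/
def overlay : PartialTiling G X where
  support := P.support ∪ Q.support
  level s := Q.level s ∪ P.level s ∩ (s⁻¹ • ·) ⁻¹' P.freeCenters Q
  measurableSet_level s := (Q.measurableSet_level s).union ((P.measurableSet_level s).inter
    (measurable_const_smul s⁻¹ (P.measurableSet_freeCenters Q)))
  disjoint_level := by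
    have hfree {x : X} {s : G} (hs : x ∈ P.level s) (hx : s⁻¹ • x ∈ P.freeCenters Q) :
        x ∉ Q.domain := by
      simpa using hx s (P.mem_shape.2 (by simpa using hs))
    refine fun s t hst ↦ disjoint_left.2 ?_
    rintro x (hxs | ⟨hxs, hx⟩) (hxt | ⟨hxt, hx'⟩)
    · exact hst (Q.eq_of_mem_level hxs hxt)
    · exact hfree hxt hx' (Q.mem_domain.2 ⟨s, hxs⟩)
    · exact hfree hxs hx (Q.mem_domain.2 ⟨t, hxt⟩)
    · exact hst (P.eq_of_mem_level hxs hxt)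
  level_eq_empty s hs := by
    rw [Finset.notMem_union] at hs
    simp [P.level_eq_empty s hs.1, Q.level_eq_empty s hs.2]

variable {P Q}

theorem mem_shape_overlay :
    s ∈ (P.overlay Q).shape y ↔ s ∈ Q.shape y ∨ s ∈ P.shape y ∧ y ∈ P.freeCenters Q := by
  simp [mem_shape, overlay]

theorem shape_overlay_of_mem (hy : y ∈ P.freeCenters Q) :
    (P.overlay Q).shape y = Q.shape y ∪ P.shape y := by
  ext s
  simp [mem_shape_overlay, hy]

theorem shape_overlay_of_notMem (hy : y ∉ P.freeCenters Q) :
    (P.overlay Q).shape y = Q.shape y := by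
  ext s
  simp [mem_shape_overlay, hy]

variable (P Q) in
theorem domain_union_domain_subset :
    P.domain ∪ Q.domain ⊆ (P.overlay Q).domain ∪
      ⋃ p ∈ P.support ×ˢ P.support, ((p.1 * p.2⁻¹) • Q.domain \ Q.domain) := by
  have hQ : Q.domain ⊆ (P.overlay Q).domain := iUnion_mono fun s ↦ subset_union_left
  refine union_subset (fun x hx ↦ ?_) (hQ.trans subset_union_left)
  obtain ⟨s, hs⟩ := P.mem_domain.1 hx
  by_cases hxQ : x ∈ Q.domain
  · exact .inl (hQ hxQ)
  by_cases hfree : s⁻¹ • x ∈ P.freeCenters Q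
  · exact .inl ((P.overlay Q).mem_domain.2 ⟨s, .inr ⟨hs, hfree⟩⟩)
  · simp only [freeCenters, mem_ofPred_eq, not_forall, not_not] at hfree
    obtain ⟨t, ht, htx⟩ := hfree
    refine .inr (mem_biUnion (x := (s, t)) ?_ ⟨?_, hxQ⟩)
    · exact Finset.mem_product.2 ⟨P.mem_support_of_mem_level hs, Finset.mem_of_mem_filter t ht⟩
    · rw [mem_smul_set_iff_inv_smul_mem, mul_inv_rev, inv_inv, mul_smul]
      exact htx

variable (P Q) in
theorem measureReal_domain_union_domain_le (ν : Measure X) [IsFiniteMeasure ν] {r : ℝ}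
    (h : ∀ s ∈ P.support, ∀ t ∈ P.support, ν.real ((s * t⁻¹) • Q.domain \ Q.domain) ≤ r) :
    ν.real (P.domain ∪ Q.domain) ≤ ν.real (P.overlay Q).domain + #P.support ^ 2 * r := by
  calc ν.real (P.domain ∪ Q.domain)
      ≤ ν.real ((P.overlay Q).domain ∪
          ⋃ p ∈ P.support ×ˢ P.support, ((p.1 * p.2⁻¹) • Q.domain \ Q.domain)) :=
        measureReal_mono (P.domain_union_domain_subset Q) (measure_ne_top _ _)
    _ ≤ ν.real (P.overlay Q).domain +
          ∑ p ∈ P.support ×ˢ P.support, ν.real ((p.1 * p.2⁻¹) • Q.domain \ Q.domain) := by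
        grw [measureReal_union_le, measureReal_biUnion_finset_le]
    _ ≤ ν.real (P.overlay Q).domain + #(P.support ×ˢ P.support) • r := by
        gcongr
        refine Finset.sum_le_card_nsmul _ _ _ fun p hp ↦ ?_
        obtain ⟨hs, ht⟩ := Finset.mem_product.1 hp
        exact h p.1 hs p.2 ht
    _ = ν.real (P.overlay Q).domain + #P.support ^ 2 * r := by
        rw [Finset.card_product, nsmul_eq_mul, sq]; push_cast; rfl

end Overlay

/-- All tiles are `(F, δ)`-invariant. -/
def HasFolnerShapes [Group G] [MeasurableSpace X] [MulAction G X] (P : PartialTiling G X)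
    (F : Finset G) (δ : ℝ) : Prop :=
  ∀ y, FolnerInv G F δ (P.shape y)

section Folner

variable [Group G] [MeasurableSpace X] [MulAction G X] {P Q : PartialTiling G X} {F : Finset G}
  {δ δ' e : ℝ} {Y : Set X}

theorem hasFolnerShapes_empty (S F : Finset G) (δ : ℝ) : (empty G X S).HasFolnerShapes F δ :=
  fun y ↦ by rw [shape_empty]; exact .empty F δ

theorem IsQuasitiling.hasFolnerShapes (hP : P.IsQuasitiling e Y)
    (hS : FolnerInv G F δ' P.support) (hδ : 0 ≤ δ) (h : δ' + #F * e ≤ δ * (1 - e)) :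
    P.HasFolnerShapes F δ := fun y ↦ by
  obtain hy | hy := (P.shape y).eq_empty_or_nonempty
  · rw [hy]
    exact .empty F δ
  · exact hS.of_subset (Finset.filter_subset _ _) (hP.le_card_shape y hy) hδ h

theorem HasFolnerShapes.overlay [MeasurableConstSMul G X] (hP : P.HasFolnerShapes F δ)
    (hQ : Q.HasFolnerShapes F δ) : (P.overlay Q).HasFolnerShapes F δ := fun y ↦ by
  by_cases hy : y ∈ P.freeCenters Q
  · rw [shape_overlay_of_mem hy]
    exact (hQ y).union (disjoint_shape_of_mem_freeCenters hy) (hP y)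
  · rw [shape_overlay_of_notMem hy]
    exact hQ y

end Folner

end PartialTiling

theorem le_measureReal_abundant [Group G] [MeasurableSpace X] [MulAction G X]
    [MeasurableConstSMul G X] (ν : Measure X) [IsProbabilityMeasure ν] [SMulInvariantMeasure G X ν]
    {S : Finset G} (hS : S.Nonempty) {B : Set X} (hB : MeasurableSet B) {b : ℝ} (hb : 0 ≤ b) :
    ν.real B - b ≤ ν.real {y | b * #S ≤ #{s ∈ S | s • y ∈ B}} := by
  have hm : ∀ s ∈ S, MeasurableSet ((s • ·) ⁻¹' B) := fun s _ ↦ measurable_const_smul s hB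
  have hsum := sum_measureReal_le_of_card_le ν hm
    (C := {y | b * #S ≤ #{s ∈ S | s • y ∈ B}}) (a := b * #S) (m := #S)
    (measurableSet_le measurable_const (measurable_card_filter_mem hm))
    (fun y _ ↦ (Nat.cast_le.2 (Finset.card_filter_le _ _)).trans
      (le_add_of_nonneg_left (by positivity)))
    (fun y hy ↦ (not_le.1 hy).le)
  simp only [measureReal_smul_preimage, Finset.sum_const, nsmul_eq_mul, probReal_univ, mul_one]
    at hsum
  have hcard : (0 : ℝ) < #S := mod_cast hS.card_pos
  refine le_of_mul_le_mul_left ?_ hcard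
  linarith

namespace PartialTiling

theorem IsQuasitiling.measureReal_domain_add_le [Group G] [MeasurableSpace X] [MulAction G X]
    [MeasurableConstSMul G X] (ν : Measure X) [IsProbabilityMeasure ν] [SMulInvariantMeasure G X ν]
    {P Q : PartialTiling G X} {e η : ℝ} {Y : Set X} (hQ : Q.IsQuasitiling e Y) (he : e < 1)
    (hη : 0 ≤ η)
    (hS : ∀ s ∈ P.support, ∀ t ∈ P.support, FolnerInv G {s * t⁻¹} η Q.support) :
    ν.real P.domain + ν.real (Q.domain ∩ P.domainᶜ) ≤
      ν.real (P.overlay Q).domain + #P.support ^ 2 * (η / (1 - e)) := by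
  calc ν.real P.domain + ν.real (Q.domain ∩ P.domainᶜ)
      = ν.real (P.domain ∪ Q.domain) := by
        rw [← sdiff_eq, ← measureReal_union disjoint_sdiff_right
          (Q.measurableSet_domain.diff P.measurableSet_domain), union_sdiff_self]
    _ ≤ ν.real (P.overlay Q).domain + #P.support ^ 2 * (η / (1 - e)) :=
        P.measureReal_domain_union_domain_le Q ν (r := η / (1 - e)) fun s hs t ht ↦ ?_
  have : 0 ≤ 1 - e := by linarith
  exact (hQ.measureReal_smul_domain_diff_le ν he (hS s hs t ht) hη).trans
    (mul_le_of_le_one_right (by positivity) measureReal_le_one)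

variable [Group G] [TopologicalSpace X] [T2Space X] [CompactSpace X] [MeasurableSpace X]
  [BorelSpace X] [MulAction G X] [ContinuousConstSMul G X] [IsCancelSMul G X]
  (ν : Measure X) [IsProbabilityMeasure ν] [SMulInvariantMeasure G X ν]
  {F S : Finset G} {e b δ ε : ℝ}

theorem exists_isQuasitiling_abundant (hS : S.Nonempty) (he : 0 ≤ e) (he' : e ≤ 1) (heb : e ≤ b)
    {B : Set X} (hB : MeasurableSet B) (hνB : 2 * b ≤ ν.real B) :
    ∃ Q : PartialTiling G X, Q.support = S ∧ (∃ Y, Q.IsQuasitiling e Y) ∧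
      (b - e) * (e * b) ≤ ν.real (Q.domain ∩ B) := by
  let Y : Set X := {y | b * #S ≤ #{s ∈ S | s • y ∈ B}}
  have hY : MeasurableSet Y := measurableSet_le measurable_const
    (measurable_card_filter_mem fun s _ ↦ measurable_const_smul s hB)
  obtain ⟨𝒰, h𝒰, hdisj, hcover⟩ := exists_finset_isOpen_cover_pairwiseDisjoint_smul (X := X) S
  obtain ⟨Q, rfl, hQ, hQY⟩ :=
    exists_isQuasitiling he' S hY 𝒰 (fun U hU ↦ (h𝒰 U hU).measurableSet) hdisj
  refine ⟨Q, rfl, ⟨Y, hQ⟩, ?_⟩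
  calc (b - e) * (e * b)
      ≤ (b - e) * (e * ν.real Y) := by
        have := sub_nonneg.2 heb
        gcongr
        linarith [le_measureReal_abundant ν hS hB (he.trans heb)]
    _ ≤ (b - e) * ν.real Q.domain := by
        have := sub_nonneg.2 heb
        gcongr
        refine mul_measureReal_le_measureReal_domain ν hS hY fun y hy ↦ ?_
        obtain ⟨U, hU, hyU⟩ := hcover y
        exact hQY y hy U hU hyU
    _ ≤ ν.real (Q.domain ∩ B) := hQ.mul_measureReal_domain_le_inter ν heb hB

theorem exists_hasFolnerShapes_gain (hG : AmenableGroup G) (F : Finset G) (hδ : 0 < δ)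
    (hε : 0 < ε) : ∃ γ > 0, ∀ P : PartialTiling G X, P.HasFolnerShapes F δ →
      ε ≤ ν.real P.domainᶜ → ∃ P' : PartialTiling G X, P'.HasFolnerShapes F δ ∧
        ν.real P.domain + γ ≤ ν.real P'.domain := by
  obtain ⟨e, he, heε, he2, heF⟩ :
      ∃ e : ℝ, 0 < e ∧ e ≤ ε / 4 ∧ e ≤ 1 / 2 ∧ #F * e ≤ δ / 4 := by
    obtain ⟨c, hc, hcδ⟩ := exists_pos_mul_lt (show 0 < δ / 4 by positivity) #F
    refine ⟨min (ε / 4) (min (1 / 2) c), by positivity, min_le_left _ _,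
      (min_le_right _ _).trans (min_le_left _ _), hcδ.le.trans' ?_⟩
    gcongr
    exact (min_le_right _ _).trans (min_le_right _ _)
  obtain ⟨γ, hγ, hγe⟩ : ∃ γ : ℝ, 0 < γ ∧ 2 * γ = (ε / 2 - e) * (e * (ε / 2)) :=
    ⟨(ε / 2 - e) * (e * (ε / 2)) / 2,
      half_pos (mul_pos (by linarith) (by positivity)), by ring⟩
  refine ⟨γ, hγ, fun P hP hεP ↦ ?_⟩
  obtain ⟨c, hc, hcγ⟩ := exists_pos_mul_lt hγ (#P.support ^ 2 / (1 - e))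
  have : (folnerFilter G).NeBot := hG.neBot_folnerFilter
  obtain ⟨S, ⟨hS, hSF⟩, hSP⟩ :=
    ((folnerFilter.eventually_nonempty_and_folnerInv F (show 0 < δ / 4 by positivity)).and
      (folnerFilter.eventually_folnerInv
        (Finset.image₂ (fun s t ↦ s * t⁻¹) P.support P.support) hc)).exists
  obtain ⟨Q, rfl, ⟨Y, hQ⟩, hgain⟩ := exists_isQuasitiling_abundant ν hS he.le (by linarith)
    (b := ε / 2) (by linarith) P.measurableSet_domain.compl (by linarith)
  have hoverlay := hQ.measureReal_domain_add_le ν (by linarith) hc.le fun s hs t ht ↦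
    hSP.mono (Finset.singleton_subset_iff.2 (Finset.mem_image₂.2 ⟨s, hs, t, ht, rfl⟩)) le_rfl
  rw [mul_div_left_comm, mul_comm c] at hoverlay
  have hFolner : δ / 4 + #F * e ≤ δ * (1 - e) := by nlinarith
  exact ⟨P.overlay Q, hP.overlay (hQ.hasFolnerShapes hSF hδ.le hFolner), by linarith⟩

theorem exists_hasFolnerShapes_measureReal_compl_lt (hG : AmenableGroup G) (F : Finset G)
    (hδ : 0 < δ) (hε : 0 < ε) :
    ∃ P : PartialTiling G X, P.HasFolnerShapes F δ ∧ ν.real P.domainᶜ < ε := by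
  by_contra! hbig
  obtain ⟨γ, hγ, hgain⟩ := exists_hasFolnerShapes_gain (X := X) ν hG F hδ hε
  let coverage : Set ℝ :=
    (fun P : PartialTiling G X ↦ ν.real P.domain) '' {P | P.HasFolnerShapes F δ}
  have hbdd : BddAbove coverage := ⟨1, forall_mem_image.2 fun P _ ↦ measureReal_le_one⟩
  have hne : coverage.Nonempty := ⟨_, mem_image_of_mem _ (hasFolnerShapes_empty ∅ F δ)⟩
  obtain ⟨_, ⟨P, hP, rfl⟩, hlt⟩ := exists_lt_of_lt_csSup hne (sub_lt_self (sSup coverage) hγ)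
  obtain ⟨P', hP', hle⟩ := hgain P hP (hbig P hP)
  have := le_csSup hbdd (mem_image_of_mem _ hP')
  simp only at hlt this
  linarith

end PartialTiling

/-! ### Castles -/

section Castle

/-- The family of all levels `t • V i`, `t ∈ T i`, is disjoint: the pairs `(T i, V i)` are towers
and together they form a castle. -/
def IsCastle [SMul G X] (T : ι → Finset G) (V : ι → Set X) : Prop :=
  {p : ι × G | p.2 ∈ T p.1}.PairwiseDisjoint fun p ↦ p.2 • V p.1

/-- The union of all levels of a castle. -/
def castleDomain [SMul G X] (T : ι → Finset G) (V : ι → Set X) : Set X :=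
  ⋃ i, (T i : Set G) • V i

theorem IsCastle.mono [SMul G X] {T : ι → Finset G} {V V' : ι → Set X} (h : IsCastle T V)
    (hV : ∀ i, V' i ⊆ V i) : IsCastle T V' :=
  PairwiseDisjoint.mono h fun p ↦ smul_set_mono (hV p.1)

variable [Group G] [MulAction G X] {T : ι → Finset G} {V V' : ι → Set X} {κ : Type*}

theorem mem_castleDomain {x : X} : x ∈ castleDomain T V ↔ ∃ i, ∃ t ∈ T i, x ∈ t • V i := by
  simp [castleDomain, ← iUnion_smul_set]

theorem castleDomain_comp_equiv (e : κ ≃ ι) :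
    castleDomain (T ∘ e) (V ∘ e) = castleDomain T V :=
  e.surjective.iUnion_comp fun i ↦ (T i : Set G) • V i

theorem IsCastle.comp_equiv (h : IsCastle T V) (e : κ ≃ ι) : IsCastle (T ∘ e) (V ∘ e) :=
  fun p hp q hq hpq ↦ h (x := (e p.1, p.2)) hp (y := (e q.1, q.2)) hq fun heq ↦
    hpq (Prod.ext (e.injective (Prod.ext_iff.1 heq).1) (Prod.ext_iff.1 heq).2)

theorem IsCastle.isTower [MetricSpace X] [MeasurableSpace X] (h : IsCastle T V) (i : ι) :
    IsTower G X (T i) (V i) := fun s hs t ht hst ↦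
  h (x := (i, s)) hs (y := (i, t)) ht fun heq ↦ hst (Prod.ext_iff.1 heq).2

theorem IsCastle.disjoint (h : IsCastle T V) {i j : ι} (hij : i ≠ j) :
    Disjoint ((T i : Set G) • V i) ((T j : Set G) • V j) := by
  simp only [← iUnion_smul_set, disjoint_iUnion_left, disjoint_iUnion_right]
  exact fun s hs t ht ↦ h (x := (i, t)) ht (y := (j, s)) hs fun heq ↦ hij (Prod.ext_iff.1 heq).1

theorem castleDomain_diff_subset :
    castleDomain T V \ castleDomain T V' ⊆ ⋃ i, ⋃ t ∈ T i, t • (V i \ V' i) := by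
  rintro x ⟨hx, hx'⟩
  obtain ⟨i, t, ht, hxt⟩ := mem_castleDomain.1 hx
  refine mem_iUnion.2 ⟨i, mem_biUnion ht ?_⟩
  rw [smul_set_sdiff]
  exact ⟨hxt, fun h ↦ hx' (mem_castleDomain.2 ⟨i, t, ht, h⟩)⟩

theorem measureReal_compl_castleDomain_le [Fintype ι] [MeasurableSpace X]
    [MeasurableConstSMul G X] (ν : Measure X) [IsFiniteMeasure ν] [SMulInvariantMeasure G X ν]
    (T : ι → Finset G) (V V' : ι → Set X) :
    ν.real (castleDomain T V')ᶜ ≤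
      ν.real (castleDomain T V)ᶜ + ∑ i, #(T i) * ν.real (V i \ V' i) := by
  have hsub : (castleDomain T V')ᶜ ⊆
      (castleDomain T V)ᶜ ∪ ⋃ i, ⋃ t ∈ T i, t • (V i \ V' i) := fun x hx ↦
    (em' (x ∈ castleDomain T V)).imp id fun h ↦ castleDomain_diff_subset ⟨h, hx⟩
  calc ν.real (castleDomain T V')ᶜ
      ≤ ν.real (castleDomain T V)ᶜ + ν.real (⋃ i, ⋃ t ∈ T i, t • (V i \ V' i)) :=
        (measureReal_mono hsub (measure_ne_top _ _)).trans (measureReal_union_le _ _)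
    _ ≤ ν.real (castleDomain T V)ᶜ + ∑ i, ∑ t ∈ T i, ν.real (t • (V i \ V' i)) := by
        gcongr
        exact (measureReal_iUnion_fintype_le _).trans
          (Finset.sum_le_sum fun i _ ↦ measureReal_biUnion_finset_le _ _)
    _ = ν.real (castleDomain T V)ᶜ + ∑ i, #(T i) * ν.real (V i \ V' i) := by
        simp [Measure.real, measure_smul]

theorem IsCastle.exists_isOpen [Finite ι] [TopologicalSpace X] [T2Space X]
    [ContinuousConstSMul G X] {K : ι → Set X} (h : IsCastle T K) (hK : ∀ i, IsCompact (K i)) :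
    ∃ U : ι → Set X, (∀ i, IsOpen (U i)) ∧ (∀ i, K i ⊆ U i) ∧ IsCastle T U := by
  have hdisj : {p : ι × G | p.2 ∈ T p.1}.PairwiseDisjoint fun p ↦ 𝓝ˢ (p.2 • K p.1) :=
    fun p hp q hq hpq ↦ separatedNhds_iff_disjoint.1
      (.of_isCompact_isCompact ((hK p.1).smul p.2) ((hK q.1).smul q.2) (h hp hq hpq))
  have hfin : {p : ι × G | p.2 ∈ T p.1}.Finite := by
    refine (finite_iUnion fun i ↦ (T i).finite_toSet.image (Prod.mk i)).subset fun p hp ↦ ?_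
    exact mem_iUnion.2 ⟨p.1, mem_image_of_mem _ hp⟩
  obtain ⟨W, hW, hWdisj⟩ := hdisj.exists_mem_filter hfin
  refine ⟨fun i ↦ ⋂ t ∈ T i, (t • ·) ⁻¹' interior (W (i, t)), fun i ↦ ?_, fun i x hx ↦ ?_,
    hWdisj.mono_on fun p hp ↦ ?_⟩
  · exact isOpen_biInter_finset fun t _ ↦ isOpen_interior.preimage (continuous_const_smul t)
  · exact mem_iInter₂.2 fun t _ ↦
      subset_interior_iff_mem_nhdsSet.2 (hW (i, t)) (smul_mem_smul_set hx)
  · rintro _ ⟨x, hx, rfl⟩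
    exact interior_subset (mem_iInter₂.1 hx p.2 hp)

end Castle

section SmallPieces

theorem exists_isOpen_cover_diam_smul_lt [PseudoMetricSpace X] [CompactSpace X] [SMul G X]
    [ContinuousConstSMul G X] (S : Finset G) {δ : ℝ} (hδ : 0 < δ) :
    ∃ (n : ℕ) (O : Fin n → Set X), (∀ k, IsOpen (O k)) ∧ ⋃ k, O k = univ ∧
      ∀ k, ∀ s ∈ S, Metric.diam (s • O k) < δ := by
  let U (x : X) : Set X := ⋂ s ∈ S, (s • ·) ⁻¹' Metric.ball (s • x) (δ / 3)
  have hU (x : X) : IsOpen (U x) := isOpen_biInter_finset fun s _ ↦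
    Metric.isOpen_ball.preimage (continuous_const_smul s)
  have hxU (x : X) : x ∈ U x := mem_iInter₂.2 fun s _ ↦
    Metric.mem_ball_self (x := s • x) (by positivity)
  obtain ⟨c, hc⟩ := isCompact_univ.elim_finite_subcover U hU fun x _ ↦ mem_iUnion.2 ⟨x, hxU x⟩
  refine ⟨#c, fun k ↦ U (c.equivFin.symm k), fun k ↦ hU _, ?_, fun k s hs ↦ ?_⟩
  · rw [c.equivFin.symm.surjective.iUnion_comp fun x : c ↦ U x, iUnion_subtype]
    exact univ_subset_iff.1 hc
  · have hsub : s • U (c.equivFin.symm k) ⊆ Metric.ball (s • (c.equivFin.symm k : X)) (δ / 3) := by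
      rintro _ ⟨y, hy, rfl⟩
      exact mem_iInter₂.1 hy s hs
    calc Metric.diam (s • U (c.equivFin.symm k))
        ≤ 2 * (δ / 3) :=
          (Metric.diam_mono hsub Metric.isBounded_ball).trans (Metric.diam_ball (by positivity))
      _ < δ := by linarith

end SmallPieces

section OpenCastle

/-- An open castle with `(F, δ)`-invariant shapes and levels of diameter less than `δ`. -/
structure IsOpenCastle [Group G] [PseudoMetricSpace X] [MulAction G X] (F : Finset G) (δ : ℝ)
    (T : ι → Finset G) (V : ι → Set X) : Prop where
  isOpen : ∀ i, IsOpen (V i)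
  isCastle : IsCastle T V
  folnerInv : ∀ i, FolnerInv G F δ (T i)
  diam_lt : ∀ i, ∀ t ∈ T i, Metric.diam (t • V i) < δ

variable [Group G] [PseudoMetricSpace X] [MulAction G X] {F : Finset G} {δ : ℝ}
  {T : ι → Finset G} {V : ι → Set X}

theorem IsOpenCastle.exists_fin [Finite ι] (h : IsOpenCastle F δ T V) :
    ∃ (n : ℕ) (T' : Fin n → Finset G) (V' : Fin n → Set X), IsOpenCastle F δ T' V' ∧
      castleDomain T' V' = castleDomain T V := by
  obtain ⟨n, ⟨e⟩⟩ := Finite.exists_equiv_fin ι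
  exact ⟨n, T ∘ e.symm, V ∘ e.symm, ⟨fun i ↦ h.isOpen _, h.isCastle.comp_equiv e.symm,
    fun i ↦ h.folnerInv _, fun i ↦ h.diam_lt _⟩, castleDomain_comp_equiv e.symm⟩

end OpenCastle

namespace PartialTiling

variable [Group G] [MeasurableSpace X] [MulAction G X] (P : PartialTiling G X)

theorem finite_range_shape : (range P.shape).Finite :=
  P.support.powerset.finite_toSet.subset (range_subset_iff.2 fun _ ↦
    Finset.mem_powerset.2 (Finset.filter_subset _ _))

theorem measurableSet_shape_eq [MeasurableConstSMul G X] (T : Finset G) :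
    MeasurableSet {y | P.shape y = T} := by
  have h : {y | P.shape y = T} = ⋂ s ∈ P.support ∪ T, {y | s • y ∈ P.level s ↔ s ∈ T} := by
    ext y
    simp only [Finset.ext_iff, mem_shape, mem_ofPred_eq, mem_iInter, Finset.mem_union]
    exact ⟨fun h s _ ↦ h s, fun h s ↦ ⟨fun hs ↦ (h s (.inl (P.mem_support_of_mem_level hs))).1 hs,
      fun hs ↦ (h s (.inr hs)).2 hs⟩⟩
  rw [h]
  refine Finset.measurableSet_biInter _ fun s _ ↦ ?_
  by_cases hs : s ∈ T
  · simp only [hs, iff_true]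
    exact measurable_const_smul s (P.measurableSet_level s)
  · simp only [hs, iff_false]
    exact measurable_const_smul s (P.measurableSet_level s).compl

variable {A : ι → Set X}

theorem isCastle_shape (hA : Pairwise (Function.onFun Disjoint A)) :
    IsCastle (fun i : range P.shape × ι ↦ (i.1 : Finset G))
      (fun i ↦ {y | P.shape y = i.1} ∩ A i.2) := by
  rintro ⟨⟨⟨T, hT⟩, i⟩, s⟩ hs ⟨⟨⟨T', hT'⟩, j⟩, t⟩ ht hne
  refine disjoint_left.2 ?_
  rintro _ ⟨y, ⟨hy, hyi⟩, rfl⟩ ⟨z, ⟨hz, hzj⟩, hyz⟩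
  simp only [mem_ofPred_eq] at hs ht hy hz hyz
  obtain rfl : s = t := P.eq_of_mem_level (P.mem_shape.1 (hy ▸ hs)) (hyz ▸ P.mem_shape.1 (hz ▸ ht))
  obtain rfl : z = y := smul_left_cancel s hyz
  obtain rfl : i = j := hA.eq (not_disjoint_iff.2 ⟨z, hyi, hzj⟩)
  exact hne (by simp [← hy, ← hz])

theorem domain_subset_castleDomain (hA : ⋃ i, A i = univ) :
    P.domain ⊆ castleDomain (fun i : range P.shape × ι ↦ (i.1 : Finset G))
      (fun i ↦ {y | P.shape y = i.1} ∩ A i.2) := by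
  intro x hx
  obtain ⟨s, hs⟩ := P.mem_domain.1 hx
  obtain ⟨i, hi⟩ := iUnion_eq_univ_iff.1 hA (s⁻¹ • x)
  refine mem_castleDomain.2 ⟨(⟨_, mem_range_self (s⁻¹ • x)⟩, i), s, ?_, s⁻¹ • x, ⟨rfl, hi⟩,
    smul_inv_smul s x⟩
  exact P.mem_shape.2 (by rwa [smul_inv_smul])

end PartialTiling

section OpenCastle

variable [Group G] [MulAction G X] {F : Finset G} {δ ε : ℝ}

theorem IsCastle.exists_isOpenCastle [Finite ι] [MetricSpace X] [CompactSpace X]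
    [MeasurableSpace X] [BorelSpace X] [ContinuousConstSMul G X] {T : ι → Finset G}
    {B O : ι → Set X} (h : IsCastle T B) (hB : ∀ i, MeasurableSet (B i)) (hO : ∀ i, IsOpen (O i))
    (hBO : ∀ i, B i ⊆ O i) (hdiam : ∀ i, ∀ t ∈ T i, Metric.diam (t • O i) < δ)
    (hT : ∀ i, FolnerInv G F δ (T i)) (ν : Measure X) [IsFiniteMeasure ν]
    [SMulInvariantMeasure G X ν] (hε : ν.real (castleDomain T B)ᶜ < ε) :
    ∃ V : ι → Set X, IsOpenCastle F δ T V ∧ ν.real (castleDomain T V)ᶜ < ε := by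
  have := Fintype.ofFinite ι
  obtain ⟨r, hr, hrε⟩ := exists_pos_mul_lt (sub_pos.2 hε) (∑ i, #(T i))
  have hK (i : ι) : ∃ K ⊆ B i, IsCompact K ∧ ν.real (B i \ K) < r := by
    obtain ⟨K, hKB, hK, hlt⟩ := (hB i).exists_isCompact_sdiff_lt (measure_ne_top ν _)
      (ENNReal.ofReal_pos.2 hr).ne'
    exact ⟨K, hKB, hK, (ENNReal.lt_ofReal_iff_toReal_lt (measure_ne_top ν _)).1 hlt⟩
  choose K hKB hK hKr using hK
  obtain ⟨U, hU, hKU, hUcastle⟩ := (h.mono hKB).exists_isOpen hK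
  refine ⟨fun i ↦ U i ∩ O i, ⟨fun i ↦ (hU i).inter (hO i),
    hUcastle.mono fun i ↦ inter_subset_left, hT, fun i t ht ↦ ?_⟩, ?_⟩
  · exact (Metric.diam_mono (smul_set_mono inter_subset_right) (Metric.isBounded_of_compactSpace)
      ).trans_lt (hdiam i t ht)
  · calc ν.real (castleDomain T fun i ↦ U i ∩ O i)ᶜ
        ≤ ν.real (castleDomain T B)ᶜ + ∑ i, #(T i) * ν.real (B i \ (U i ∩ O i)) :=
          measureReal_compl_castleDomain_le ν T B _
      _ ≤ ν.real (castleDomain T B)ᶜ + ∑ i, #(T i) * r := by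
          gcongr with i
          refine (measureReal_mono ?_ (measure_ne_top _ _)).trans (hKr i).le
          exact sdiff_subset_sdiff_right (subset_inter (hKU i) ((hKB i).trans (hBO i)))
      _ < ε := by
          rw [← Finset.sum_mul]
          linarith

theorem exists_isOpenCastle [MetricSpace X] [CompactSpace X] [MeasurableSpace X] [BorelSpace X]
    [ContinuousConstSMul G X] [IsCancelSMul G X] (hG : AmenableGroup G) (F : Finset G)
    (hδ : 0 < δ) (hε : 0 < ε) (ν : Measure X) [IsProbabilityMeasure ν]
    [SMulInvariantMeasure G X ν] :
    ∃ (n : ℕ) (T : Fin n → Finset G) (V : Fin n → Set X), IsOpenCastle F δ T V ∧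
      ν.real (castleDomain T V)ᶜ < ε := by
  obtain ⟨P, hP, hPε⟩ :=
    PartialTiling.exists_hasFolnerShapes_measureReal_compl_lt (X := X) ν hG F hδ hε
  obtain ⟨n, O, hO, hcover, hdiam⟩ := exists_isOpen_cover_diam_smul_lt (X := X) P.support hδ
  have hA (k : Fin n) : MeasurableSet (disjointed O k) :=
    disjointedRec (fun _ _ h ↦ h.diff (hO _).measurableSet) (hO k).measurableSet
  have : Finite (range P.shape) := P.finite_range_shape
  have hdomain := P.domain_subset_castleDomain ((iUnion_disjointed (f := O)).trans hcover)
  obtain ⟨V, hV, hVε⟩ := (P.isCastle_shape (disjoint_disjointed O)).exists_isOpenCastle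
    (F := F) (δ := δ) (O := fun i ↦ O i.2)
    (fun i ↦ (P.measurableSet_shape_eq i.1).inter (hA i.2)) (fun i ↦ hO i.2)
    (fun i ↦ inter_subset_right.trans (disjointed_subset O i.2))
    (by
      rintro ⟨⟨_, y, rfl⟩, k⟩ t ht
      exact hdiam k t (Finset.mem_of_mem_filter t ht))
    (by rintro ⟨⟨_, y, rfl⟩, k⟩; exact hP y) ν
    ((measureReal_mono (compl_subset_compl.2 hdomain) (measure_ne_top _ _)).trans_lt hPε)
  obtain ⟨n, T', V', hV', heq⟩ := hV.exists_fin
  exact ⟨n, T', V', hV', heq ▸ hVε⟩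

end OpenCastle

/-! ### Invariant measures -/

section ProbabilityMeasure

variable [TopologicalSpace X] [MeasurableSpace X] [BorelSpace X]

theorem upperSemicontinuous_measureReal [HasOuterApproxClosed X] {C : Set X}
    (hC : IsClosed C) :
    UpperSemicontinuous fun μ : ProbabilityMeasure X ↦ (μ : Measure X).real C := by
  intro μ r hr
  have hlimsup := ProbabilityMeasure.limsup_measure_closed_le_of_tendsto (tendsto_id (x := 𝓝 μ)) hC
  have hlt : (μ : Measure X) C < ENNReal.ofReal r :=
    (ENNReal.lt_ofReal_iff_toReal_lt (measure_ne_top _ _)).2 hr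
  filter_upwards [eventually_lt_of_limsup_lt (hlimsup.trans_lt hlt)] with ν hν
  exact (ENNReal.lt_ofReal_iff_toReal_lt (measure_ne_top _ _)).1 hν

variable [CompactSpace X]

theorem continuous_integral_continuousMap (f : C(X, ℝ)) :
    Continuous fun μ : ProbabilityMeasure X ↦ ∫ x, f x ∂μ :=
  ProbabilityMeasure.continuous_integral_boundedContinuousFunction (.mkOfCompact f)

theorem integrable_continuousMap (f : C(X, ℝ)) (μ : Measure X) [IsFiniteMeasure μ] :
    Integrable f μ :=
  (BoundedContinuousFunction.mkOfCompact f).integrable μ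

theorem exists_extreme_probabilityMeasure [HasOuterApproxClosed X]
    {K : Set (ProbabilityMeasure X)} (hK : IsCompact K)
    (hne : K.Nonempty) :
    ∃ μ ∈ K, ∀ ν₁ ∈ K, ∀ ν₂ ∈ K, ∀ a b : NNReal, 0 < a → 0 < b → a + b = 1 →
      (μ : Measure X) = a • (ν₁ : Measure X) + b • (ν₂ : Measure X) → ν₁ = μ := by
  let Φ (μ : ProbabilityMeasure X) (f : C(X, ℝ)) : ℝ := ∫ x, f x ∂μ
  have hΦ : Continuous Φ := continuous_pi continuous_integral_continuousMap
  obtain ⟨_, ⟨μ, hμ, rfl⟩, hext⟩ := (hK.image hΦ).extremePoints_nonempty (hne.image Φ)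
  refine ⟨μ, hμ, fun ν₁ h₁ ν₂ h₂ a b ha hb hab hμab ↦ ?_⟩
  have hseg : Φ μ ∈ openSegment ℝ (Φ ν₁) (Φ ν₂) := by
    refine ⟨a, b, ha, hb, mod_cast hab, funext fun f ↦ ?_⟩
    simp only [Φ, hμab]
    rw [integral_add_measure ((integrable_continuousMap f _).smul_measure_nnreal)
      ((integrable_continuousMap f _).smul_measure_nnreal), integral_smul_nnreal_measure,
      integral_smul_nnreal_measure]
    rfl
  have hΦν : Φ ν₁ = Φ μ := hext (mem_image_of_mem Φ h₁) (mem_image_of_mem Φ h₂) hseg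
  exact ProbabilityMeasure.toMeasure_injective
    (ext_of_forall_integral_eq_of_IsFiniteMeasure fun f ↦ congrFun hΦν f.toContinuousMap)

end ProbabilityMeasure

section InvariantMeasure

theorem le_left_of_le_convexComb {a b x y m : ℝ} (ha : 0 < a) (hb : 0 ≤ b) (hab : a + b = 1)
    (hy : y ≤ m) (h : m ≤ a * x + b * y) : m ≤ x := by
  refine le_of_mul_le_mul_left ?_ ha
  calc a * m = m - b * m := by rw [eq_sub_of_add_eq hab]; ring
    _ ≤ a * x := by linarith [mul_le_mul_of_nonneg_left hy hb]

theorem smulInvariantMeasure_cond [Group G] [MeasurableSpace X] [MulAction G X]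
    [MeasurableConstSMul G X] (μ : Measure X) [SMulInvariantMeasure G X μ] {A : Set X}
    (hA : MeasurableSet A) (hinv : ∀ g : G, g • A = A) :
    SMulInvariantMeasure G X (ProbabilityTheory.cond μ A) := by
  refine ⟨fun g s _ ↦ ?_⟩
  have h : A ∩ (g • ·) ⁻¹' s = (g • ·) ⁻¹' (A ∩ s) := by
    rw [preimage_inter, preimage_smul g A, hinv]
  rw [ProbabilityTheory.cond_apply hA, ProbabilityTheory.cond_apply hA, h,
    measure_preimage_smul]

variable [Group G] [MetricSpace X] [MeasurableSpace X] [BorelSpace X] [MulAction G X]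
  [ContinuousConstSMul G X] {μ : ProbabilityMeasure X}

theorem mem_MG_iff_smulInvariantMeasure :
    μ ∈ MG G X ↔ SMulInvariantMeasure G X (μ : Measure X) :=
  ((smulInvariantMeasure_tfae G (μ : Measure X)).out 0 5).symm

theorem isClosed_MG : IsClosed (MG G X) := by
  have h : MG G X = ⋂ g : G, {μ | μ.map (measurable_const_smul g).aemeasurable = μ} := by
    ext μ
    simp only [MG, InvariantMeasure, mem_iInter, mem_ofPred_eq,
      ← ProbabilityMeasure.toMeasure_injective.eq_iff]
    rfl
  rw [h]
  exact isClosed_iInter fun g ↦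
    isClosed_eq (ProbabilityMeasure.continuous_map (continuous_const_smul g)) continuous_id

theorem exists_eq_add_of_mem_MG_of_notMem_EG (hμ : μ ∈ MG G X) (hμ' : μ ∉ EG G X) :
    ∃ ν₁ ∈ MG G X, ∃ ν₂ ∈ MG G X, ∃ a b : NNReal, 0 < a ∧ 0 < b ∧ a + b = 1 ∧
      (μ : Measure X) = a • (ν₁ : Measure X) + b • (ν₂ : Measure X) ∧ ν₁ ≠ μ := by
  obtain ⟨A, hA, hinv, hA0, hA1⟩ : ∃ A, MeasurableSet A ∧ (∀ g : G, g • A = A) ∧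
      μ A ≠ 0 ∧ μ A ≠ 1 := by
    by_contra! h
    exact hμ' ⟨hμ, fun A hA hinv ↦ or_iff_not_imp_left.2 (h A hA hinv)⟩
  have := mem_MG_iff_smulInvariantMeasure.1 hμ
  have hadd : μ A + μ Aᶜ = 1 := by
    rw [← ENNReal.coe_inj]
    simpa using prob_add_prob_compl (μ := (μ : Measure X)) hA
  have hAc : μ Aᶜ ≠ 0 := fun h ↦ hA1 (by rwa [h, add_zero] at hadd)
  have := smulInvariantMeasure_cond (G := G) (μ : Measure X) hA hinv
  have := smulInvariantMeasure_cond (G := G) (μ : Measure X) hA.compl fun g ↦ by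
    rw [smul_set_compl, hinv]
  have h₁ := ProbabilityTheory.cond_isProbabilityMeasure (μ := (μ : Measure X)) (s := A)
    ((μ.null_iff_toMeasure_null A).not.1 hA0)
  have h₂ := ProbabilityTheory.cond_isProbabilityMeasure (μ := (μ : Measure X)) (s := Aᶜ)
    ((μ.null_iff_toMeasure_null Aᶜ).not.1 hAc)
  refine ⟨⟨_, h₁⟩, mem_MG_iff_smulInvariantMeasure.2 ‹_›, ⟨_, h₂⟩,
    mem_MG_iff_smulInvariantMeasure.2 ‹_›, μ A, μ Aᶜ, pos_iff_ne_zero.2 hA0, pos_iff_ne_zero.2 hAc,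
    hadd, ?_, fun h ↦ hAc ?_⟩
  · ext t -
    simpa [ENNReal.smul_def, mul_comm] using
      (ProbabilityTheory.cond_add_cond_compl_eq hA (μ : Measure X) (t := t)).symm
  · rw [← h]
    simp [ProbabilityMeasure.mk_apply, ProbabilityTheory.cond_apply hA]

theorem exists_mem_EG_forall_measureReal_le [CompactSpace X] (hne : (MG G X).Nonempty) {C : Set X}
    (hC : IsClosed C) :
    ∃ ν ∈ EG G X, ∀ μ ∈ MG G X, (μ : Measure X).real C ≤ (ν : Measure X).real C := by
  obtain ⟨μ₀, hμ₀, hmax⟩ := ((upperSemicontinuous_measureReal hC).upperSemicontinuousOn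
    (MG G X)).exists_isMaxOn hne isClosed_MG.isCompact
  let K : Set (ProbabilityMeasure X) :=
    MG G X ∩ {μ | (μ₀ : Measure X).real C ≤ (μ : Measure X).real C}
  have hK : IsCompact K := isClosed_MG.isCompact.inter_right
    ((upperSemicontinuous_measureReal hC).isClosed_preimage _)
  obtain ⟨ν, ⟨hν, hνC⟩, hext⟩ :=
    exists_extreme_probabilityMeasure hK ⟨μ₀, hμ₀, le_refl (Measure.real _ C)⟩
  refine ⟨ν, by_contra fun hνE ↦ ?_, fun μ hμ ↦ (hmax hμ).trans hνC⟩
  obtain ⟨ν₁, h₁, ν₂, h₂, a, b, ha, hb, hab, hνab, hne⟩ :=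
    exists_eq_add_of_mem_MG_of_notMem_EG hν hνE
  have hle₁ : (ν₁ : Measure X).real C ≤ (μ₀ : Measure X).real C := hmax h₁
  have hle₂ : (ν₂ : Measure X).real C ≤ (μ₀ : Measure X).real C := hmax h₂
  have hsum : (μ₀ : Measure X).real C ≤
      a * (ν₁ : Measure X).real C + b * (ν₂ : Measure X).real C := by
    refine hνC.trans_eq ?_
    simp [hνab, Measure.real, ENNReal.toReal_add, ENNReal.mul_ne_top]
  have hab' : (a : ℝ) + b = 1 := mod_cast hab
  refine hne (hext ν₁ ⟨h₁, ?_⟩ ν₂ ⟨h₂, ?_⟩ a b ha hb hab hνab)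
  · exact le_left_of_le_convexComb ha b.2 hab' hle₂ hsum
  · exact le_left_of_le_convexComb hb a.2 (by rwa [add_comm]) hle₁ (by rwa [add_comm])

end InvariantMeasure

/-! ### Følner averages of continuous functions -/

section FolnerAverage

variable [Group G] [TopologicalSpace X] [MulAction G X] [ContinuousConstSMul G X]

/-- The Koopman operator of `g`, translating a continuous function along the action. -/
def koopman (g : G) : C(X, ℝ) →ₗ[ℝ] C(X, ℝ) :=
  (ContinuousMap.compRightAlgHom ℝ ℝ ⟨(g • · : X → X), continuous_const_smul g⟩).toLinearMap

@[simp]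
theorem koopman_apply (g : G) (f : C(X, ℝ)) (x : X) : koopman g f x = f (g • x) := rfl

variable (G X) in
/-- The space of coboundaries, spanned by the functions `v ∘ g - v` with `v` continuous. -/
def coboundaries : Submodule ℝ C(X, ℝ) := ⨆ g : G, LinearMap.range (koopman (X := X) g - 1)

theorem koopman_sub_mem_coboundaries (g : G) (v : C(X, ℝ)) :
    koopman g v - v ∈ coboundaries G X :=
  Submodule.mem_iSup_of_mem g ⟨v, rfl⟩

/-- The average of the translates of a continuous function over a finite subset of `G`. -/
def orbitAverage (S : Finset G) : C(X, ℝ) →ₗ[ℝ] C(X, ℝ) := (#S : ℝ)⁻¹ • ∑ s ∈ S, koopman s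

theorem orbitAverage_eq (S : Finset G) (f : C(X, ℝ)) :
    orbitAverage S f = (#S : ℝ)⁻¹ • ∑ s ∈ S, koopman s f := by
  simp [orbitAverage]

theorem orbitAverage_const {S : Finset G} (hS : S.Nonempty) (c : ℝ) :
    orbitAverage S (.const X c) = .const X c := by
  have hcard : (#S : ℝ) ≠ 0 := mod_cast hS.card_ne_zero
  ext x
  simp [orbitAverage_eq, hcard]

variable [CompactSpace X]

theorem norm_koopman_le (g : G) (f : C(X, ℝ)) : ‖koopman g f‖ ≤ ‖f‖ :=
  (ContinuousMap.norm_le _ (norm_nonneg f)).2 fun x ↦ f.norm_coe_le_norm (g • x)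

theorem norm_sum_koopman_le (A : Finset G) (f : C(X, ℝ)) :
    ‖∑ s ∈ A, koopman s f‖ ≤ #A * ‖f‖ := by
  simpa using norm_sum_le_of_le A fun s _ ↦ norm_koopman_le s f

theorem card_image_mul_sdiff_le (g : G) (S : Finset G) :
    #(S.image (g * ·) \ S) ≤ #(translationBoundary {g} S) := by
  refine (Finset.card_le_card fun y hy ↦ ?_).trans (Finset.card_image_le (f := (g * ·)))
  obtain ⟨hy, hyS⟩ := Finset.mem_sdiff.1 hy
  obtain ⟨s, hs, rfl⟩ := Finset.mem_image.1 hy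
  exact Finset.mem_image_of_mem _ (Finset.mem_filter.2 ⟨hs, g, Finset.mem_singleton_self g, hyS⟩)

theorem norm_orbitAverage_koopman_sub_le {g : G} {S : Finset G} {δ : ℝ} (hδ : 0 ≤ δ)
    (hS : FolnerInv G {g} δ S) (v : C(X, ℝ)) :
    ‖orbitAverage S (koopman g v - v)‖ ≤ 2 * δ * ‖v‖ := by
  rw [folnerInv_iff_card_translationBoundary_le] at hS
  set S' := S.image (g * ·) with hS'
  have hcard : #S' = #S := Finset.card_image_of_injective _ (mul_right_injective g)
  have hleft : (#(S' \ S) : ℝ) ≤ δ * #S :=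
    (Nat.cast_le.2 (card_image_mul_sdiff_le g S)).trans hS
  have hright : (#(S \ S') : ℝ) ≤ δ * #S := by rwa [Finset.card_sdiff_comm hcard.symm]
  have hsum : ∑ s ∈ S, koopman s (koopman g v - v) =
      ∑ s ∈ S' \ S, koopman s v - ∑ s ∈ S \ S', koopman s v := by
    rw [Finset.sum_sdiff_sub_sum_sdiff, hS', Finset.sum_image fun a _ b _ h ↦ mul_left_cancel h,
      ← Finset.sum_sub_distrib]
    exact Finset.sum_congr rfl fun s _ ↦ ContinuousMap.ext fun x ↦ by simp [mul_smul]
  have hnorm : ‖∑ s ∈ S, koopman s (koopman g v - v)‖ ≤ #S * (2 * δ * ‖v‖) :=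
    calc ‖∑ s ∈ S, koopman s (koopman g v - v)‖
        ≤ #(S' \ S) * ‖v‖ + #(S \ S') * ‖v‖ := by
          rw [hsum]
          exact (norm_sub_le _ _).trans
            (add_le_add (norm_sum_koopman_le _ v) (norm_sum_koopman_le _ v))
      _ ≤ δ * #S * ‖v‖ + δ * #S * ‖v‖ := by gcongr
      _ = #S * (2 * δ * ‖v‖) := by ring
  rw [orbitAverage_eq, norm_smul, norm_inv, Real.norm_natCast]
  exact inv_mul_le_of_le_mul₀ (Nat.cast_nonneg _) (by positivity) hnorm

theorem tendsto_orbitAverage_koopman_sub (g : G) (v : C(X, ℝ)) :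
    Tendsto (fun S ↦ orbitAverage S (koopman g v - v)) (folnerFilter G) (𝓝 0) := by
  refine Metric.tendsto_nhds.2 fun η hη ↦ ?_
  have hδ : 0 < η / (2 * (‖v‖ + 1)) := by positivity
  filter_upwards [folnerFilter.eventually_folnerInv {g} hδ] with S hS
  rw [dist_zero_right]
  calc ‖orbitAverage S (koopman g v - v)‖
      ≤ 2 * (η / (2 * (‖v‖ + 1))) * ‖v‖ := norm_orbitAverage_koopman_sub_le hδ.le hS v
    _ = η * ‖v‖ / (‖v‖ + 1) := by field_simp
    _ < η := by
        rw [div_lt_iff₀ (by positivity)]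
        linarith

theorem tendsto_orbitAverage_of_mem_coboundaries {u : C(X, ℝ)} (hu : u ∈ coboundaries G X) :
    Tendsto (fun S ↦ orbitAverage S u) (folnerFilter G) (𝓝 0) := by
  induction hu using Submodule.iSup_induction' with
  | mem g u hu =>
    obtain ⟨v, rfl⟩ := hu
    exact tendsto_orbitAverage_koopman_sub g v
  | zero => simpa using tendsto_const_nhds
  | add u v _ _ hu hv => simpa using hu.add hv

end FolnerAverage

section MeanErgodic

variable [TopologicalSpace X] [CompactSpace X] [MeasurableSpace X] [BorelSpace X]

/-- The standard deviation of a continuous function with respect to a probability measure. -/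
def stdDev (μ : Measure X) (f : C(X, ℝ)) : ℝ := √(ProbabilityTheory.variance f μ)

theorem norm_toLp_sq (μ : Measure X) [IsFiniteMeasure μ] (f : C(X, ℝ)) :
    ‖ContinuousMap.toLp 2 μ ℝ f‖ ^ 2 = ∫ x, f x ^ 2 ∂μ := by
  rw [← real_inner_self_eq_norm_sq, ContinuousMap.inner_toLp]
  simp [sq]

theorem norm_toLp_two_le (μ : Measure X) [IsProbabilityMeasure μ] (f : C(X, ℝ)) :
    ‖ContinuousMap.toLp 2 μ ℝ f‖ ≤ ‖f‖ := by
  have h : ‖(ContinuousMap.toLp 2 μ ℝ : C(X, ℝ) →L[ℝ] Lp ℝ 2 μ)‖ ≤ 1 := by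
    simpa [measureUnivNNReal] using ContinuousMap.toLp_norm_le (p := 2) (E := ℝ) μ (𝕜 := ℝ)
  simpa using ContinuousLinearMap.le_of_opNorm_le _ h f

variable (μ : Measure X) [IsProbabilityMeasure μ]

theorem stdDev_eq_norm_toLp (f : C(X, ℝ)) :
    stdDev μ f = ‖ContinuousMap.toLp 2 μ ℝ (f - .const X (∫ x, f x ∂μ))‖ := by
  rw [stdDev, ProbabilityTheory.variance_eq_integral f.continuous.aemeasurable]
  refine (Real.sqrt_eq_iff_eq_sq ?_ (norm_nonneg _)).2 ?_
  · exact integral_nonneg fun x ↦ sq_nonneg _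
  · rw [norm_toLp_sq]
    rfl

theorem stdDev_le_norm_toLp_sub_const (f : C(X, ℝ)) (c : ℝ) :
    stdDev μ f ≤ ‖ContinuousMap.toLp 2 μ ℝ (f - .const X c)‖ := by
  refine Real.sqrt_le_iff.2 ⟨norm_nonneg _, ?_⟩
  rw [norm_toLp_sq, ← ProbabilityTheory.variance_sub_const f.continuous.aestronglyMeasurable c]
  exact ProbabilityTheory.variance_le_expectation_sq (by fun_prop)

theorem stdDev_le_norm (f : C(X, ℝ)) : stdDev μ f ≤ ‖f‖ := by
  simpa using (stdDev_le_norm_toLp_sub_const μ f 0).trans (norm_toLp_two_le μ _)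

theorem stdDev_add_le (f h : C(X, ℝ)) : stdDev μ (f + h) ≤ stdDev μ f + stdDev μ h := by
  simp only [stdDev_eq_norm_toLp]
  refine le_trans (le_of_eq ?_) (norm_add_le _ _)
  rw [← map_add]
  congr 2
  ext x
  simp [integral_add (integrable_continuousMap f μ) (integrable_continuousMap h μ)]
  ring

theorem continuous_stdDev (f : C(X, ℝ)) :
    Continuous fun μ : ProbabilityMeasure X ↦ stdDev (μ : Measure X) f := by
  have h (μ : ProbabilityMeasure X) : stdDev (μ : Measure X) f =
      √(∫ x, (f ^ 2) x ∂(μ : Measure X) - (∫ x, f x ∂(μ : Measure X)) ^ 2) := by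
    rw [stdDev, ProbabilityTheory.variance_eq_sub (f.memLp _ ℝ)]
    rfl
  simp only [h]
  exact ((continuous_integral_continuousMap _).sub
    ((continuous_integral_continuousMap f).pow 2)).sqrt

theorem measureReal_abs_sub_integral_ge_le (f : C(X, ℝ)) {γ : ℝ} (hγ : 0 < γ) :
    μ.real {x | γ ≤ |f x - ∫ y, f y ∂μ|} ≤ (stdDev μ f / γ) ^ 2 := by
  have h := ProbabilityTheory.meas_ge_le_variance_div_sq (f.memLp μ ℝ) hγ
  rw [div_pow, stdDev, Real.sq_sqrt (ProbabilityTheory.variance_nonneg _ _)]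
  exact ENNReal.toReal_le_of_le_ofReal
    (div_nonneg (ProbabilityTheory.variance_nonneg _ _) (sq_nonneg γ)) h

variable [Group G] [MulAction G X] [ContinuousConstSMul G X] [SMulInvariantMeasure G X μ]

theorem toLp_koopman (g : G) (f : C(X, ℝ)) : ContinuousMap.toLp 2 μ ℝ (koopman g f) =
    Lp.compMeasurePreservingₗᵢ ℝ (g • ·) (measurePreserving_smul g μ)
      (ContinuousMap.toLp 2 μ ℝ f) :=
  rfl

theorem norm_toLp_orbitAverage_le (S : Finset G) (f : C(X, ℝ)) :
    ‖ContinuousMap.toLp 2 μ ℝ (orbitAverage S f)‖ ≤ ‖ContinuousMap.toLp 2 μ ℝ f‖ := by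
  rw [orbitAverage_eq, map_smul, map_sum, norm_smul, norm_inv, Real.norm_natCast]
  refine inv_mul_le_of_le_mul₀ (Nat.cast_nonneg _) (norm_nonneg _) ?_
  simpa using norm_sum_le_of_le S fun s _ ↦
    ((congrArg norm (toLp_koopman μ s f)).trans (LinearIsometry.norm_map _ _)).le

theorem integral_orbitAverage {S : Finset G} (hS : S.Nonempty) (f : C(X, ℝ)) :
    ∫ x, orbitAverage S f x ∂μ = ∫ x, f x ∂μ := by
  have hcard : (#S : ℝ) ≠ 0 := mod_cast hS.card_ne_zero
  have hinv (s : G) : ∫ x, f (s • x) ∂μ = ∫ x, f x ∂μ :=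
    (measurePreserving_smul s μ).integral_comp (measurableEmbedding_const_smul s) f
  simp only [orbitAverage_eq, ContinuousMap.smul_apply, ContinuousMap.sum_apply, smul_eq_mul]
  rw [integral_const_mul, integral_finsetSum _ fun s _ ↦ integrable_continuousMap (koopman s f) μ]
  simp [hinv, hcard]

theorem stdDev_orbitAverage_le {S : Finset G} (hS : S.Nonempty) (f : C(X, ℝ)) :
    stdDev μ (orbitAverage S f) ≤ stdDev μ f := by
  have h := norm_toLp_orbitAverage_le μ S (f - .const X (∫ x, f x ∂μ))
  rwa [map_sub, orbitAverage_const hS, ← integral_orbitAverage μ hS f, ← stdDev_eq_norm_toLp,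
    integral_orbitAverage μ hS, ← stdDev_eq_norm_toLp] at h

end MeanErgodic

section UniformMeanErgodic

variable [Group G] [MeasurableSpace X] [MulAction G X]

theorem exists_ae_eq_const_of_ergodicSMul (μ : Measure X) [ErgodicSMul G X μ] {w : X → ℝ}
    (hw : AEMeasurable w μ) (hinv : ∀ g : G, (fun x ↦ w (g • x)) =ᵐ[μ] w) :
    ∃ c, w =ᵐ[μ] fun _ ↦ c :=
  exists_eventuallyEq_const_of_forall_separating MeasurableSet fun U hU ↦ by
    have hU_inv (g : G) : (g • ·) ⁻¹' (w ⁻¹' U) =ᵐ[μ] w ⁻¹' U := (hinv g).preimage U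
    have h := aeconst_of_forall_preimage_smul_ae_eq G (hw.nullMeasurableSet_preimage hU) hU_inv
    rcases eventuallyConst_set.1 h with h | h
    · exact .inl h
    · exact .inr h

variable [MetricSpace X] [BorelSpace X] [ContinuousConstSMul G X]

theorem ergodicSMul_of_mem_EG [Countable G] {ν : ProbabilityMeasure X} (hν : ν ∈ EG G X) :
    ErgodicSMul G X (ν : Measure X) where
  toSMulInvariantMeasure := mem_MG_iff_smulInvariantMeasure.1 hν.1
  aeconst_of_forall_preimage_smul_ae_eq {s} hs hinv := by
    have hcore : (⋂ g : G, (g • ·) ⁻¹' s : Set X) =ᵐ[(ν : Measure X)] s := by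
      simpa only [iInter_const] using Filter.EventuallyEq.countable_iInter hinv
    have hcore_inv (g : G) : g • (⋂ h : G, (h • ·) ⁻¹' s : Set X) = ⋂ h : G, (h • ·) ⁻¹' s := by
      ext x
      simp only [mem_smul_set_iff_inv_smul_mem, mem_iInter, mem_preimage, smul_smul]
      exact ⟨fun hx k ↦ by simpa using hx (k * g), fun hx k ↦ hx _⟩
    have hmeas : MeasurableSet (⋂ h : G, (h • ·) ⁻¹' s : Set X) :=
      .iInter fun h ↦ measurable_const_smul h hs
    refine EventuallyConst.congr ?_ hcore
    rw [eventuallyConst_set']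
    rcases hν.2 _ hmeas hcore_inv with h0 | h1
    · left
      rw [ae_eq_empty]
      simpa using h0
    · right
      rw [ae_eq_univ, prob_compl_eq_zero_iff hmeas,
        ← ProbabilityMeasure.ennreal_coeFn_eq_coeFn_toMeasure, h1]
      rfl

variable [CompactSpace X] (μ : Measure X) [IsProbabilityMeasure μ]

variable (G) in
/-- The closure in `L²(μ)` of the space of continuous coboundaries. -/
def coboundariesL2 : Submodule ℝ (Lp ℝ 2 μ) :=
  ((coboundaries G X).map (ContinuousMap.toLp 2 μ ℝ : C(X, ℝ) →L[ℝ] Lp ℝ 2 μ).toLinearMap)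
    |>.topologicalClosure

theorem compMeasurePreserving_sub_mem_coboundariesL2 [SMulInvariantMeasure G X μ] (g : G)
    (a : Lp ℝ 2 μ) :
    Lp.compMeasurePreservingₗᵢ ℝ (g • ·) (measurePreserving_smul g μ) a - a ∈
      coboundariesL2 G μ := by
  have hdense := ContinuousMap.toLp_denseRange (E := ℝ) (p := 2) (μ := μ) ℝ (by norm_num)
  refine hdense.induction_on a ?_ fun v ↦ ?_
  · exact (Submodule.isClosed_topologicalClosure _).preimage
      ((LinearIsometry.continuous _).sub continuous_id)
  · refine Submodule.le_topologicalClosure _ ⟨_, koopman_sub_mem_coboundaries g v, ?_⟩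
    exact (map_sub _ _ _).trans (congrArg (· - _) (toLp_koopman μ g v))

theorem compMeasurePreserving_eq_of_mem_orthogonal [SMulInvariantMeasure G X μ] {w : Lp ℝ 2 μ}
    (hw : w ∈ (coboundariesL2 G μ)ᗮ) (g : G) :
    Lp.compMeasurePreservingₗᵢ ℝ (g • ·) (measurePreserving_smul g μ) w = w := by
  refine eq_of_norm_le_re_inner_eq_norm_sq (𝕜 := ℝ) (LinearIsometry.norm_map _ w).le ?_
  have h := hw _ (compMeasurePreserving_sub_mem_coboundariesL2 μ g w)
  rw [inner_sub_left, sub_eq_zero, real_inner_self_eq_norm_sq] at h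
  simpa using h

theorem exists_eq_toLp_const_of_mem_orthogonal [ErgodicSMul G X μ] {w : Lp ℝ 2 μ}
    (hw : w ∈ (coboundariesL2 G μ)ᗮ) : ∃ c, w = ContinuousMap.toLp 2 μ ℝ (.const X c) := by
  have hinv (g : G) : (fun x ↦ w (g • x)) =ᵐ[μ] w := by
    conv_rhs => rw [← compMeasurePreserving_eq_of_mem_orthogonal μ hw g]
    exact (Lp.coeFn_compMeasurePreserving w (measurePreserving_smul g μ)).symm
  obtain ⟨c, hc⟩ :=
    exists_ae_eq_const_of_ergodicSMul μ (Lp.aestronglyMeasurable w).aemeasurable hinv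
  exact ⟨c, Lp.ext (hc.trans (ContinuousMap.coeFn_toLp μ (.const X c)).symm)⟩

theorem exists_mem_coboundaries_stdDev_sub_lt [ErgodicSMul G X μ] (f : C(X, ℝ)) {η : ℝ}
    (hη : 0 < η) : ∃ u ∈ coboundaries G X, stdDev μ (f - u) < η := by
  set L : C(X, ℝ) →L[ℝ] Lp ℝ 2 μ := ContinuousMap.toLp 2 μ ℝ
  have hcomplete : CompleteSpace (coboundariesL2 G μ) :=
    (Submodule.isClosed_topologicalClosure _).completeSpace_coe
  set p := (coboundariesL2 G μ).starProjection (L f)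
  obtain ⟨c, hc⟩ := exists_eq_toLp_const_of_mem_orthogonal μ
    (Submodule.sub_starProjection_mem_orthogonal (K := coboundariesL2 G μ) (L f))
  have hp : p ∈ coboundariesL2 G μ := Submodule.starProjection_apply_mem _ _
  obtain ⟨_, ⟨u, hu, rfl⟩, hlt⟩ := Metric.mem_closure_iff.1 hp η hη
  refine ⟨u, hu, (stdDev_le_norm_toLp_sub_const μ (f - u) c).trans_lt ?_⟩
  have hL : L (f - u - .const X c) = p - L u := by
    rw [map_sub, map_sub, ← hc]
    abel
  rwa [hL, ← dist_eq_norm]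

theorem eventually_forall_mem_EG_stdDev_orbitAverage_lt [Countable G]
    (hcpt : IsCompact (EG G X)) (f : C(X, ℝ)) {η : ℝ} (hη : 0 < η) :
    ∀ᶠ S in folnerFilter G, ∀ ν ∈ EG G X, stdDev (ν : Measure X) (orbitAverage S f) < η := by
  have happrox (ν : ProbabilityMeasure X) (hν : ν ∈ EG G X) :
      ∃ u ∈ coboundaries G X, stdDev (ν : Measure X) (f - u) < η / 2 :=
    have := ergodicSMul_of_mem_EG hν
    exists_mem_coboundaries_stdDev_sub_lt _ f (half_pos hη)
  choose! u hu hlt using happrox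
  obtain ⟨t, htE, hcover⟩ := hcpt.elim_nhds_subcover
    (fun ν ↦ {ν' : ProbabilityMeasure X | stdDev (ν' : Measure X) (f - u ν) < η / 2})
    fun ν hν ↦ (continuous_stdDev _).continuousAt.eventually_lt_const (hlt ν hν)
  have hsmall : ∀ᶠ S in folnerFilter G, ∀ ν ∈ t, ‖orbitAverage S (u ν)‖ < η / 2 := by
    refine (eventually_all_finset t).2 fun ν hν ↦ ?_
    have h := (tendsto_orbitAverage_of_mem_coboundaries (hu ν (htE ν hν))).norm
    rw [norm_zero] at h
    exact h.eventually_lt_const (half_pos hη)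
  filter_upwards [hsmall, folnerFilter.eventually_nonempty G] with S hS hne ν hν
  obtain ⟨ν₀, hν₀, hνν₀⟩ := mem_iUnion₂.1 (hcover hν)
  have := mem_MG_iff_smulInvariantMeasure.1 hν.1
  calc stdDev (ν : Measure X) (orbitAverage S f)
      = stdDev (ν : Measure X) (orbitAverage S (f - u ν₀) + orbitAverage S (u ν₀)) := by
        rw [← map_add, sub_add_cancel]
    _ ≤ stdDev (ν : Measure X) (f - u ν₀) + ‖orbitAverage S (u ν₀)‖ :=
        (stdDev_add_le _ _ _).trans
          (add_le_add (stdDev_orbitAverage_le _ hne _) (stdDev_le_norm _ _))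
    _ < η := by linarith [hS ν₀ hν₀, mem_ofPred.1 hνν₀]

end UniformMeanErgodic

/-! ### Separating compact sets of ergodic measures -/

section SeparatingFunctions

variable [TopologicalSpace X] [HasOuterApproxClosed X] [MeasurableSpace X] [BorelSpace X]

theorem exists_integral_ne {μ ν : ProbabilityMeasure X} (h : μ ≠ ν) :
    ∃ f : C(X, ℝ), ∫ x, f x ∂(μ : Measure X) ≠ ∫ x, f x ∂(ν : Measure X) := by
  by_contra! heq
  have hμν : (μ : Measure X) = ν :=
    ext_of_forall_integral_eq_of_IsFiniteMeasure fun f ↦ heq f.toContinuousMap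
  exact h (Subtype.ext hμν)

variable [CompactSpace X]

theorem exists_finset_forall_exists_le_abs_integral_sub
    {D : Set (ProbabilityMeasure X × ProbabilityMeasure X)} (hD : IsCompact D)
    (hne : ∀ p ∈ D, p.1 ≠ p.2) :
    ∃ Λ : Finset C(X, ℝ), ∃ γ > 0, ∀ p ∈ D, ∃ f ∈ Λ,
      γ ≤ |∫ x, f x ∂(p.1 : Measure X) - ∫ x, f x ∂(p.2 : Measure X)| := by
  refine hD.induction_on ⟨∅, 1, one_pos, by simp⟩ ?_ ?_ fun p hp ↦ ?_
  · rintro s t hst ⟨Λ, γ, hγ, h⟩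
    exact ⟨Λ, γ, hγ, fun p hp ↦ h p (hst hp)⟩
  · rintro s t ⟨Λ, γ, hγ, h⟩ ⟨Λ', γ', hγ', h'⟩
    refine ⟨Λ ∪ Λ', min γ γ', lt_min hγ hγ', fun p hp ↦ ?_⟩
    rcases hp with hp | hp
    · obtain ⟨f, hf, hle⟩ := h p hp
      exact ⟨f, Finset.mem_union_left _ hf, (min_le_left _ _).trans hle⟩
    · obtain ⟨f, hf, hle⟩ := h' p hp
      exact ⟨f, Finset.mem_union_right _ hf, (min_le_right _ _).trans hle⟩
  · obtain ⟨f, hf⟩ := exists_integral_ne (hne p hp)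
    obtain ⟨γ, hγ, hlt⟩ := exists_between (abs_pos.2 (sub_ne_zero.2 hf))
    have hcont : Continuous fun q : ProbabilityMeasure X × ProbabilityMeasure X ↦
        |∫ x, f x ∂(q.1 : Measure X) - ∫ x, f x ∂(q.2 : Measure X)| :=
      (((continuous_integral_continuousMap f).comp continuous_fst).sub
        ((continuous_integral_continuousMap f).comp continuous_snd)).abs
    exact ⟨{q | γ < |∫ x, f x ∂(q.1 : Measure X) - ∫ x, f x ∂(q.2 : Measure X)|},
      mem_nhdsWithin_of_mem_nhds (hcont.continuousAt.eventually_const_lt hlt),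
      {f}, γ, hγ, fun q hq ↦ ⟨f, Finset.mem_singleton_self f, (mem_ofPred.1 hq).le⟩⟩

end SeparatingFunctions

section GenericSet

variable [TopologicalSpace X] [MeasurableSpace X] [Group G] [MulAction G X]
  [ContinuousConstSMul G X]

/-- The set of points at which the averages over `S` of all functions in `Λ` are `γ`-close to their
integrals with respect to `ν`. -/
def genericSet (S : Finset G) (Λ : Finset C(X, ℝ)) (γ : ℝ) (ν : Measure X) : Set X :=
  ⋂ f ∈ Λ, {x | |orbitAverage S f x - ∫ y, f y ∂ν| < γ}

variable {S : Finset G} {Λ : Finset C(X, ℝ)} {γ : ℝ}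

theorem isOpen_genericSet (ν : Measure X) : IsOpen (genericSet S Λ γ ν) :=
  isOpen_biInter_finset fun f _ ↦ isOpen_lt (by fun_prop) continuous_const

theorem disjoint_genericSet {μ ν : Measure X} {f : C(X, ℝ)} (hf : f ∈ Λ)
    (hγ : 2 * γ ≤ |∫ x, f x ∂μ - ∫ x, f x ∂ν|) :
    Disjoint (genericSet S Λ γ μ) (genericSet S Λ γ ν) := by
  refine disjoint_left.2 fun x hμ hν ↦ hγ.not_gt ?_
  have hμ : |orbitAverage S f x - ∫ y, f y ∂μ| < γ := mem_iInter₂.1 hμ f hf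
  have hν : |orbitAverage S f x - ∫ y, f y ∂ν| < γ := mem_iInter₂.1 hν f hf
  rw [abs_sub_comm] at hμ
  linarith [abs_sub_le (∫ y, f y ∂μ) (orbitAverage S f x) (∫ y, f y ∂ν)]

variable [CompactSpace X] [BorelSpace X]

theorem measureReal_compl_genericSet_le (ν : Measure X) [IsProbabilityMeasure ν]
    [SMulInvariantMeasure G X ν] (hS : S.Nonempty) (hγ : 0 < γ) {κ : ℝ}
    (hκ : ∀ f ∈ Λ, stdDev ν (orbitAverage S f) ≤ κ) :
    ν.real (genericSet S Λ γ ν)ᶜ ≤ #Λ * (κ / γ) ^ 2 := by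
  have hcompl : (genericSet S Λ γ ν)ᶜ =
      ⋃ f ∈ Λ, {x | γ ≤ |orbitAverage S f x - ∫ y, orbitAverage S f y ∂ν|} := by
    ext x
    simp [genericSet, integral_orbitAverage ν hS]
  have hlevel (f : C(X, ℝ)) (hf : f ∈ Λ) :
      ν.real {x | γ ≤ |orbitAverage S f x - ∫ y, orbitAverage S f y ∂ν|} ≤ (κ / γ) ^ 2 := by
    refine (measureReal_abs_sub_integral_ge_le ν _ hγ).trans ?_
    gcongr
    · exact div_nonneg (Real.sqrt_nonneg _) hγ.le
    · exact hκ f hf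
  rw [hcompl, ← nsmul_eq_mul]
  exact (measureReal_biUnion_finset_le _ _).trans (Finset.sum_le_card_nsmul _ _ _ hlevel)

end GenericSet

section Separation

variable [Group G] [MetricSpace X] [CompactSpace X] [MeasurableSpace X] [BorelSpace X]
  [MulAction G X] [ContinuousConstSMul G X]

theorem eventually_forall_mem_EG_measureReal_compl_genericSet_lt [Countable G]
    (hcpt : IsCompact (EG G X)) (Λ : Finset C(X, ℝ)) {γ η : ℝ} (hγ : 0 < γ) (hη : 0 < η) :
    ∀ᶠ S in folnerFilter G, ∀ ν ∈ EG G X,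
      (ν : Measure X).real (genericSet S Λ γ (ν : Measure X))ᶜ < η := by
  have hcard : 0 < η / (#Λ + 1) := by positivity
  have hdev := (eventually_all_finset Λ).2 fun f _ ↦
    eventually_forall_mem_EG_stdDev_orbitAverage_lt hcpt f
      (mul_pos hγ (Real.sqrt_pos.2 hcard))
  filter_upwards [hdev, folnerFilter.eventually_nonempty G] with S hS hne ν hν
  have := mem_MG_iff_smulInvariantMeasure.1 hν.1
  calc (ν : Measure X).real (genericSet S Λ γ (ν : Measure X))ᶜ
      ≤ #Λ * (γ * √(η / (#Λ + 1)) / γ) ^ 2 :=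
        measureReal_compl_genericSet_le _ hne hγ fun f hf ↦ (hS f hf ν hν).le
    _ = #Λ * η / (#Λ + 1) := by
        rw [mul_div_cancel_left₀ _ hγ.ne', Real.sq_sqrt hcard.le, mul_div_assoc]
    _ < η := by
        rw [div_lt_iff₀ (by positivity)]
        linarith

theorem exists_pairwise_disjoint_isOpen_measureReal_compl_lt [Countable G] (hG : AmenableGroup G)
    (hcpt : IsCompact (EG G X)) [Finite ι] {E : ι → Set (ProbabilityMeasure X)}
    (hE : ∀ i, IsCompact (E i)) (hEG : ∀ i, E i ⊆ EG G X)
    (hdisj : Pairwise (Function.onFun Disjoint E)) {η : ℝ} (hη : 0 < η) :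
    ∃ W : ι → Set X, (∀ i, IsOpen (W i)) ∧ Pairwise (Function.onFun Disjoint W) ∧
      ∀ i, ∀ ν ∈ E i, (ν : Measure X).real (W i)ᶜ < η := by
  have hD : IsCompact (⋃ p : {p : ι × ι // p.1 ≠ p.2}, E p.1.1 ×ˢ E p.1.2) :=
    isCompact_iUnion fun p ↦ (hE _).prod (hE _)
  obtain ⟨Λ, γ, hγ, hsep⟩ := exists_finset_forall_exists_le_abs_integral_sub hD fun q hq ↦ by
    obtain ⟨p, hp⟩ := mem_iUnion.1 hq
    exact (hdisj p.2).ne_of_mem hp.1 hp.2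
  have := hG.neBot_folnerFilter
  obtain ⟨S, hS⟩ := (eventually_forall_mem_EG_measureReal_compl_genericSet_lt hcpt Λ
    (half_pos hγ) hη).exists
  refine ⟨fun i ↦ ⋃ ν ∈ E i, genericSet S Λ (γ / 2) (ν : Measure X),
    fun i ↦ isOpen_biUnion fun ν _ ↦ isOpen_genericSet _, fun i j hij ↦ ?_, fun i ν hν ↦ ?_⟩
  · refine disjoint_iUnion₂_left.2 fun μ hμ ↦ disjoint_iUnion₂_right.2 fun ν hν ↦ ?_
    obtain ⟨f, hf, hle⟩ := hsep (μ, ν) (mem_iUnion.2 ⟨⟨(i, j), hij⟩, hμ, hν⟩)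
    exact disjoint_genericSet hf (by linarith)
  · exact (measureReal_mono (compl_subset_compl.2 (subset_biUnion_of_mem hν))
      (measure_ne_top _ _)).trans_lt (hS ν (hEG i hν))

end Separation

/-! ### Gluing castles -/

theorem exists_finite_partition_isCompact {α : Type*} [TopologicalSpace α] [T2Space α] {Y : Set α}
    (hY : IsCompact Y) (htd : IsTotallyDisconnected Y) {O : α → Set α}
    (hO : ∀ y ∈ Y, O y ∈ 𝓝 y) :
    ∃ (n : ℕ) (E : Fin n → Set α) (c : Fin n → α), (∀ i, IsCompact (E i)) ∧ ⋃ i, E i = Y ∧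
      Pairwise (Function.onFun Disjoint E) ∧ ∀ i, c i ∈ Y ∧ E i ⊆ O (c i) := by
  have : CompactSpace Y := isCompact_iff_compactSpace.1 hY
  have : TotallyDisconnectedSpace Y := totallyDisconnectedSpace_subtype_iff.2 htd
  let U (y : Y) : TopologicalSpace.Opens Y :=
    ⟨(↑) ⁻¹' interior (O y), isOpen_interior.preimage continuous_subtype_val⟩
  have hU : TopologicalSpace.IsOpenCover U := .mk <| eq_top_iff.2 fun y _ ↦
    TopologicalSpace.Opens.mem_iSup.2 ⟨y, mem_interior_iff_mem_nhds.2 (hO y y.2)⟩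
  obtain ⟨n, E, hEU, hcover, hdisj⟩ := hU.exists_finite_nonempty_disjoint_clopen_cover
  choose _ c hc using hEU
  refine ⟨n, fun i ↦ (↑) '' (E i : Set Y), fun i ↦ c i,
    fun i ↦ (E i).isClopen.isClosed.isCompact.image continuous_subtype_val, ?_, fun i j hij ↦ ?_,
    fun i ↦ ⟨(c i).2, ?_⟩⟩
  · rw [← image_iUnion, univ_subset_iff.1 hcover, image_univ, Subtype.range_coe]
  · refine (disjoint_image_iff Subtype.val_injective).2 ?_
    exact TopologicalSpace.Clopens.coe_disjoint.2 (hdisj hij)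
  · rintro _ ⟨y, hy, rfl⟩
    exact interior_subset (hc i hy)

section RestrictBase

variable [Group G] [MulAction G X]

/-- The bases of a castle, shrunk to the points all of whose levels lie in `W`. -/
def restrictBase (T : ι → Finset G) (V : ι → Set X) (W : Set X) (i : ι) : Set X :=
  V i ∩ ⋂ t ∈ T i, (t • ·) ⁻¹' W

variable {T : ι → Finset G} {V : ι → Set X} {W : Set X}

theorem castleDomain_restrictBase_subset : castleDomain T (restrictBase T V W) ⊆ W := by
  intro x hx
  obtain ⟨i, t, ht, y, hy, rfl⟩ := mem_castleDomain.1 hx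
  exact mem_iInter₂.1 hy.2 t ht

theorem measureReal_sdiff_restrictBase_le [MeasurableSpace X] [MeasurableConstSMul G X]
    (ν : Measure X) [IsFiniteMeasure ν] [SMulInvariantMeasure G X ν] (i : ι) :
    ν.real (V i \ restrictBase T V W i) ≤ #(T i) * ν.real Wᶜ := by
  have hsub : V i \ restrictBase T V W i ⊆ ⋃ t ∈ T i, (t • ·) ⁻¹' Wᶜ := fun x hx ↦ by
    by_contra h
    exact hx.2 ⟨hx.1, by simpa using h⟩
  calc ν.real (V i \ restrictBase T V W i)
      ≤ ∑ t ∈ T i, ν.real ((t • ·) ⁻¹' Wᶜ) :=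
        (measureReal_mono hsub (measure_ne_top _ _)).trans (measureReal_biUnion_finset_le _ _)
    _ = #(T i) * ν.real Wᶜ := by
        simp only [measureReal_smul_preimage, Finset.sum_const, nsmul_eq_mul]

theorem measureReal_compl_castleDomain_restrictBase_le [Fintype ι] [MeasurableSpace X]
    [MeasurableConstSMul G X] (ν : Measure X) [IsFiniteMeasure ν] [SMulInvariantMeasure G X ν] :
    ν.real (castleDomain T (restrictBase T V W))ᶜ ≤
      ν.real (castleDomain T V)ᶜ + (∑ i, (#(T i) : ℝ) ^ 2) * ν.real Wᶜ := by
  refine (measureReal_compl_castleDomain_le ν T V _).trans ?_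
  rw [Finset.sum_mul]
  simp only [sq, mul_assoc]
  gcongr
  exact measureReal_sdiff_restrictBase_le ν _

end RestrictBase

section Sigma

variable [Group G] [MulAction G X] {κ : ι → Type*} {T : ∀ i, κ i → Finset G}
  {V : ∀ i, κ i → Set X} {W : ι → Set X}

theorem castleDomain_subset_castleDomain_sigma (i : ι) :
    castleDomain (T i) (V i) ⊆ castleDomain (fun p : Sigma κ ↦ T p.1 p.2) fun p ↦ V p.1 p.2 :=
  fun _ hx ↦
    let ⟨j, hj⟩ := mem_castleDomain.1 hx
    mem_castleDomain.2 ⟨⟨i, j⟩, hj⟩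

theorem IsCastle.sigma (h : ∀ i, IsCastle (T i) (V i))
    (hW : Pairwise (Function.onFun Disjoint W)) (hsub : ∀ i, castleDomain (T i) (V i) ⊆ W i) :
    IsCastle (fun p : Sigma κ ↦ T p.1 p.2) fun p ↦ V p.1 p.2 := by
  rintro ⟨⟨i, a⟩, s⟩ hs ⟨⟨j, b⟩, t⟩ ht hne
  by_cases hij : i = j
  · subst hij
    exact h i (x := (a, s)) hs (y := (b, t)) ht fun heq ↦ hne (by simp_all)
  · exact (hW hij).mono (fun x hx ↦ hsub i (mem_castleDomain.2 ⟨a, s, hs, hx⟩))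
      fun x hx ↦ hsub j (mem_castleDomain.2 ⟨b, t, ht, hx⟩)

end Sigma

section OpenCastle

variable [Group G] [MulAction G X] {F : Finset G} {δ : ℝ}

theorem isOpen_castleDomain [TopologicalSpace X] [ContinuousConstSMul G X] {T : ι → Finset G}
    {V : ι → Set X} (hV : ∀ i, IsOpen (V i)) : IsOpen (castleDomain T V) :=
  isOpen_iUnion fun i ↦ (hV i).smul_left

theorem IsOpenCastle.restrictBase [PseudoMetricSpace X] [CompactSpace X] [ContinuousConstSMul G X]
    {T : ι → Finset G} {V : ι → Set X} {W : Set X} (h : IsOpenCastle F δ T V) (hW : IsOpen W) :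
    IsOpenCastle F δ T (restrictBase T V W) where
  isOpen i := (h.isOpen i).inter <|
    isOpen_biInter_finset fun t _ ↦ hW.preimage (continuous_const_smul t)
  isCastle := h.isCastle.mono fun _ ↦ inter_subset_left
  folnerInv := h.folnerInv
  diam_lt i t ht := (Metric.diam_mono (smul_set_mono inter_subset_left)
    Metric.isBounded_of_compactSpace).trans_lt (h.diam_lt i t ht)

theorem IsOpenCastle.sigma [PseudoMetricSpace X] {κ : ι → Type*} {T : ∀ i, κ i → Finset G}
    {V : ∀ i, κ i → Set X} {W : ι → Set X} (h : ∀ i, IsOpenCastle F δ (T i) (V i))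
    (hW : Pairwise (Function.onFun Disjoint W)) (hsub : ∀ i, castleDomain (T i) (V i) ⊆ W i) :
    IsOpenCastle F δ (fun p : Sigma κ ↦ T p.1 p.2) fun p ↦ V p.1 p.2 where
  isOpen p := (h p.1).isOpen p.2
  isCastle := .sigma (fun i ↦ (h i).isCastle) hW hsub
  folnerInv p := (h p.1).folnerInv p.2
  diam_lt p := (h p.1).diam_lt p.2

end OpenCastle

section Uniform

variable [Group G] [Countable G] [MetricSpace X] [CompactSpace X] [MeasurableSpace X]
  [BorelSpace X] [MulAction G X] [ContinuousConstSMul G X] {F : Finset G} {δ ε : ℝ}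

theorem exists_isOpenCastle_of_partition (hG : AmenableGroup G) (hcpt : IsCompact (EG G X))
    [Finite ι] {E : ι → Set (ProbabilityMeasure X)} (hE : ∀ i, IsCompact (E i))
    (hEG : ⋃ i, E i = EG G X) (hdisj : Pairwise (Function.onFun Disjoint E))
    {n : ι → ℕ} {T : ∀ i, Fin (n i) → Finset G} {V : ∀ i, Fin (n i) → Set X}
    (hV : ∀ i, IsOpenCastle F δ (T i) (V i)) (hε : 0 < ε)
    (hEV : ∀ i, ∀ ν ∈ E i, (ν : Measure X).real (castleDomain (T i) (V i))ᶜ < ε) :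
    ∃ (N : ℕ) (T : Fin N → Finset G) (V : Fin N → Set X), IsOpenCastle F δ T V ∧
      ∀ ν ∈ EG G X, (ν : Measure X).real (castleDomain T V)ᶜ < 2 * ε := by
  have := Fintype.ofFinite ι
  obtain ⟨η, hη, hηε⟩ := exists_pos_mul_lt hε (∑ i, ∑ a, (#(T i a) : ℝ) ^ 2)
  obtain ⟨W, hW, hWdisj, hWη⟩ :=
    exists_pairwise_disjoint_isOpen_measureReal_compl_lt hG hcpt hE
      (fun i ↦ hEG ▸ subset_iUnion E i) hdisj hη
  have hcastle := IsOpenCastle.sigma (fun i ↦ (hV i).restrictBase (hW i)) hWdisj fun i ↦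
    castleDomain_restrictBase_subset
  obtain ⟨N, T', V', hV', heq⟩ := hcastle.exists_fin
  refine ⟨N, T', V', hV', fun ν hν ↦ ?_⟩
  have := mem_MG_iff_smulInvariantMeasure.1 hν.1
  obtain ⟨i, hi⟩ := mem_iUnion.1 (hEG.symm ▸ hν)
  rw [heq]
  calc (ν : Measure X).real _
      ≤ (ν : Measure X).real (castleDomain (T i) (restrictBase (T i) (V i) (W i)))ᶜ :=
        measureReal_mono (compl_subset_compl.2
          (castleDomain_subset_castleDomain_sigma (V := fun i ↦ restrictBase (T i) (V i) (W i)) i))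
          (measure_ne_top _ _)
    _ ≤ (ν : Measure X).real (castleDomain (T i) (V i))ᶜ +
          (∑ a, (#(T i a) : ℝ) ^ 2) * (ν : Measure X).real (W i)ᶜ :=
        measureReal_compl_castleDomain_restrictBase_le _
    _ ≤ (ν : Measure X).real (castleDomain (T i) (V i))ᶜ +
          (∑ i, ∑ a, (#(T i a) : ℝ) ^ 2) * η := by
        gcongr
        · exact Finset.single_le_sum (f := fun i ↦ ∑ a, (#(T i a) : ℝ) ^ 2)
            (fun i _ ↦ by positivity) (Finset.mem_univ i)
        · exact (hWη i ν hi).le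
    _ < 2 * ε := by linarith [hEV i ν hi]

theorem exists_isOpenCastle_forall_mem_EG (hG : AmenableGroup G) (hfree : FreeAction G X)
    (hcpt : IsCompact (EG G X)) (hzd : IsTotallyDisconnected (EG G X)) (F : Finset G)
    (hδ : 0 < δ) (hε : 0 < ε) :
    ∃ (n : ℕ) (T : Fin n → Finset G) (V : Fin n → Set X), IsOpenCastle F δ T V ∧
      ∀ ν ∈ EG G X, (ν : Measure X).real (castleDomain T V)ᶜ < ε := by
  have := hfree.isCancelSMul
  have hcastle (ν : ProbabilityMeasure X) (hν : ν ∈ EG G X) :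
      ∃ (n : ℕ) (T : Fin n → Finset G) (V : Fin n → Set X), IsOpenCastle F δ T V ∧
        (ν : Measure X).real (castleDomain T V)ᶜ < ε / 2 :=
    have := mem_MG_iff_smulInvariantMeasure.1 hν.1
    exists_isOpenCastle hG F hδ (half_pos hε) _
  choose! n T V hV hVε using hcastle
  have hnhds (ν : ProbabilityMeasure X) (hν : ν ∈ EG G X) :
      {ν' : ProbabilityMeasure X | (ν' : Measure X).real (castleDomain (T ν) (V ν))ᶜ < ε / 2} ∈
        𝓝 ν :=
    upperSemicontinuous_measureReal (isOpen_castleDomain (hV ν hν).isOpen).isClosed_compl ν _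
      (hVε ν hν)
  obtain ⟨N, E, c, hE, hcover, hdisj, hc⟩ := exists_finite_partition_isCompact hcpt hzd hnhds
  obtain ⟨N, T, V, hV, hlt⟩ := exists_isOpenCastle_of_partition hG hcpt hE hcover hdisj
    (fun i ↦ hV (c i) (hc i).1) (half_pos hε) fun i ν hν ↦ (hc i).2 hν
  exact ⟨N, T, V, hV, fun ν hν ↦ (hlt ν hν).trans_eq (mul_div_cancel₀ ε two_ne_zero)⟩

theorem exists_isOpenCastle_forall_mem_MG (hG : AmenableGroup G) (hfree : FreeAction G X)
    (hcpt : IsCompact (EG G X)) (hzd : IsTotallyDisconnected (EG G X)) (F : Finset G)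
    (hδ : 0 < δ) (hε : 0 < ε) :
    ∃ (n : ℕ) (T : Fin n → Finset G) (V : Fin n → Set X), IsOpenCastle F δ T V ∧
      ∀ μ ∈ MG G X, (μ : Measure X).real (castleDomain T V)ᶜ < ε := by
  obtain ⟨n, T, V, hV, hlt⟩ := exists_isOpenCastle_forall_mem_EG hG hfree hcpt hzd F hδ hε
  refine ⟨n, T, V, hV, fun μ hμ ↦ ?_⟩
  have hclosed : IsClosed (castleDomain T V)ᶜ := (isOpen_castleDomain hV.isOpen).isClosed_compl
  obtain ⟨ν, hν, hle⟩ := exists_mem_EG_forall_measureReal_le ⟨μ, hμ⟩ hclosed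
  exact (hle μ hμ).trans_lt (hlt ν hν)

end Uniform

theorem exists_open_castle_almost_covering_general
    {G X : Type*} [Group G] [Countable G] [MetricSpace X] [CompactSpace X]
    [MeasurableSpace X] [BorelSpace X] [MulAction G X] [ContinuousConstSMul G X]
    (hG : AmenableGroup G) (hfree : FreeAction G X)
    (hcpt : IsCompact (EG G X)) (hzd : IsTotallyDisconnected (EG G X))
    (F : Finset G) (ε δ : ℝ) (hε : 0 < ε) (hδ : 0 < δ) :
    ∃ (I : ℕ) (T : Fin I → Finset G) (V : Fin I → Set X),
      (∀ i, IsOpen (V i)) ∧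
      (∀ i, IsTower G X (T i) (V i)) ∧
      (∀ i j, i ≠ j → Disjoint ((T i : Set G) • V i) ((T j : Set G) • V j)) ∧
      (∀ i, FolnerInv G F δ (T i)) ∧
      (∀ i, ∀ t ∈ T i, Metric.diam (t • V i) < δ) ∧
      ∀ μ ∈ MG G X, (μ (Set.univ \ ⋃ i, (T i : Set G) • V i) : ℝ) < ε := by
  obtain ⟨n, T, V, hV, hlt⟩ := exists_isOpenCastle_forall_mem_MG hG hfree hcpt hzd F hδ hε
  refine ⟨n, T, V, hV.isOpen, hV.isCastle.isTower, fun i j hij ↦ hV.isCastle.disjoint hij,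
    hV.folnerInv, hV.diam_lt, fun μ hμ ↦ ?_⟩
  rw [← compl_eq_univ_sdiff]
  exact hlt μ hμ

end

/-- "almost finiteness in measure": if `E_G(X)` is compact and zero-dimensional
then for every finite `F ⊆ G` and `ε, δ > 0` there is an open castle `{(T_i, V_i)}` with
`(F,δ)`-invariant shapes, levels of diameter `< δ`, and
`μ(X \ ⊔_i T_i · V_i) < ε` for all `μ ∈ M_G(X)`. -/
theorem exists_open_castle_almost_covering
    {G X : Type*} [Group G] [Countable G] [Infinite G]
    [MetricSpace X] [CompactSpace X] [Infinite X]
    [MeasurableSpace X] [BorelSpace X]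
    [MulAction G X] [ContinuousConstSMul G X]
    (hG : AmenableGroup G)
    (hfree : FreeAction G X) (hmin : MinimalAction G X)
    (hcpt : IsCompact (EG G X)) (hzd : IsTotallyDisconnected (EG G X))
    (F : Finset G) (ε δ : ℝ) (hε : 0 < ε) (hδ : 0 < δ) :
    ∃ (I : ℕ) (T : Fin I → Finset G) (V : Fin I → Set X),
      (∀ i, IsOpen (V i)) ∧
      (∀ i, IsTower G X (T i) (V i)) ∧
      (∀ i j, i ≠ j → Disjoint ((T i : Set G) • V i) ((T j : Set G) • V j)) ∧
      (∀ i, FolnerInv G F δ (T i)) ∧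
      (∀ i, ∀ t ∈ T i, Metric.diam (t • V i) < δ) ∧
      ∀ μ ∈ MG G X, (μ (Set.univ \ ⋃ i, (T i : Set G) • V i) : ℝ) < ε :=
  exists_open_castle_almost_covering_general hG hfree hcpt hzd F ε δ hε hδ
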